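/- arXiv:1410.2540 — 2 statements merged into one kernel-verified Lean document; each statement's English description precedes it below -/
import Mathlib

section
/- Let F be a free group, let w ∈ F be a nontrivial element that is not a proper power (i.e., if w = u^k for some u ∈ F and integer k, then k = 1 or k = −1), and let C = ⟨w⟩ be the cyclic subgroup generated by w. Let H be a subgroup of F generated by n elements. Then the number of double cosets HgC (g ∈ F) such that H ∩ gCg⁻¹ is nontrivial is at most n; equivalently, if g₁, …, g_k ∈ F lie in pairwise distinct double cosets Hg_iC and H ∩ g_iCg_i⁻¹ ≠ {1} for each i, then k ≤ n. -/
/-!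
The argument is the stacking proof of the W-cycles conjecture (Louder–Wilton, Helfer–Wise), carried
out in the Schreier graph of `X = F ⧸ H`: its vertices are the points of `X`, and each `(x, a)` is
an edge from `x` to `a • x`.

*Order.* Replace `w` by a cyclically reduced conjugate, the word `L`, and let `C = ⟨L⟩`.  For any
finite `T ⊆ F` there is a subsemigroup `P` of `F`, stable under multiplication by `C` on both sides
and disjoint from `C`, such that every `t ∈ T` outside `C` has `t ∈ P` or `t⁻¹ ∈ P` (`exists_cone`).
It is built from homomorphisms to `ℤ`: a subgroup of `F` that contains `w` and is not contained in
`⟨w⟩` is free (Nielsen–Schreier), and is not cyclic because `w` is not a proper power, so it has a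
nonzero homomorphism to `ℤ` killing `w`.  Declaring `q⁻¹ q' ∈ P` to mean `q C < q' C`, one gets a
left-invariant order on the finitely many cosets of `C` that occur, hence a linear order on the
positions of `L` that is respected whenever the same letter is read at two positions: a stacking
(`StackedWord`, `exists_stackedWord`).

*Circles.* Reading `L` from a point of `X` permutes the set of pairs (point of `X`, position in
`L`).  The double cosets in question give distinct finite cycles of this permutation.

*Counting.* Let `Ω` be a union of `k` such cycles, `E` the set of edges and `V` the set of vertices
they cover.  Call a step of a cycle *top* if it is the highest of all steps over its edge, so there
are at most `|E|` top steps.  Over each vertex the highest position has a top step before and a top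
step after it, which gives `|V|` top steps preceded by a top step.  If no cycle consists of top
steps only, each cycle also has a top step preceded by a step that is not top; so `k + |V| ≤ |E|`,
and `|E| - |V|` is at most the mod 2 cycle rank of `E`.  If some cycle consists of top steps only,
its step at the lowest position is alone over its edge, so deleting that cycle lowers the cycle
rank, and induction applies.  Thus `k` is at most the cycle rank of `E`
(`StackedWord.card_le_finrank`), which is at most the number of generators of `H`
(`finrank_cyclesOn_le`).
-/

/-! ### Mod 2 homology of Schreier graphs -/

/-- The mod 2 boundary map of the Schreier graph of an action of `FreeGroup α` on `X`.  The pair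
`(x, a)` encodes the edge from `x` to `a • x`. -/
noncomputable def schreierBoundary (α X : Type*) [MulAction (FreeGroup α) X] :
    (X × α →₀ ZMod 2) →ₗ[ZMod 2] (X →₀ ZMod 2) :=
  Finsupp.lsum ℕ fun e : X × α =>
    (Finsupp.lsingle e.1 : ZMod 2 →ₗ[ZMod 2] _) + Finsupp.lsingle (FreeGroup.of e.2 • e.1)

theorem schreierBoundary_single {α X : Type*} [MulAction (FreeGroup α) X] (x : X) (a : α) :
    schreierBoundary α X (Finsupp.single (x, a) 1) =
      Finsupp.single x 1 + Finsupp.single (FreeGroup.of a • x) 1 := by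
  simp [schreierBoundary]

/-- The mod 2 one-cycles of the Schreier graph that are supported on the set of edges `E`. -/
noncomputable def cyclesOn {α X : Type*} [MulAction (FreeGroup α) X] (E : Set (X × α)) :
    Submodule (ZMod 2) (X × α →₀ ZMod 2) :=
  Finsupp.supported (ZMod 2) (ZMod 2) E ⊓ LinearMap.ker (schreierBoundary α X)

theorem zmod2_add_self {M : Type*} [AddCommGroup M] [Module (ZMod 2) M] (x : M) : x + x = 0 := by
  have : (2 : ZMod 2) • x = 0 := by rw [show (2 : ZMod 2) = 0 from rfl, zero_smul]
  rwa [two_smul] at this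

/-- The action of `FreeGroup α` on pairs (vertex, chain) in which a generator `a` moves the vertex
along the edge labelled `a` and adds that edge to the chain. -/
noncomputable def pathPerm (α X : Type*) [MulAction (FreeGroup α) X] :
    FreeGroup α →* Equiv.Perm (X × (X × α →₀ ZMod 2)) :=
  FreeGroup.lift fun a =>
    { toFun := fun p => (FreeGroup.of a • p.1, p.2 + Finsupp.single (p.1, a) 1)
      invFun := fun p => ((FreeGroup.of a)⁻¹ • p.1,
        p.2 + Finsupp.single ((FreeGroup.of a)⁻¹ • p.1, a) 1)
      left_inv := fun p => by
        ext1 <;> simp [add_assoc, zmod2_add_self]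
      right_inv := fun p => by
        ext1 <;> simp [add_assoc, zmod2_add_self] }

/-- The mod 2 chain of the path that starts at `x` and spells the element `g`; letters act on the
left, so the last letter of `g` comes first. -/
noncomputable def pathChain {α X : Type*} [MulAction (FreeGroup α) X] (g : FreeGroup α) (x : X) :
    X × α →₀ ZMod 2 := (pathPerm α X g (x, 0)).2

/-- The chain recorded so far does not influence what is added to it. -/
theorem pathPerm_apply {α X : Type*} [MulAction (FreeGroup α) X] (g : FreeGroup α)
    (x : X) (c : X × α →₀ ZMod 2) :
    pathPerm α X g (x, c) = (g • x, c + pathChain g x) := by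
  have key : ∀ (x : X) (c : X × α →₀ ZMod 2), (pathPerm α X g (x, c)).1 = g • x ∧
      ∀ d, (pathPerm α X g (x, d + c)).2 = d + (pathPerm α X g (x, c)).2 := by
    induction g using FreeGroup.induction_on with
    | C1 => intro x c; simp
    | of a => intro x c; simp [pathPerm, add_assoc]
    | inv_of a h => intro x c; simp [pathPerm, add_assoc, Equiv.Perm.inv_def]
    | mul g h hg hh =>
      intro x c
      have e : ∀ p : X × (X × α →₀ ZMod 2), p = (p.1, p.2) := fun p => rfl
      rw [map_mul, Equiv.Perm.mul_apply, e (pathPerm α X h (x, c)), (hh x c).1]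
      refine ⟨by rw [(hg _ _).1, mul_smul], fun d => ?_⟩
      rw [Equiv.Perm.mul_apply, e (pathPerm α X h (x, d + c)), (hh x c).2 d, (hh x (d + c)).1,
        (hg _ _).2]
  ext1
  · exact (key x c).1
  · have := (key x 0).2 c
    rwa [add_zero] at this

theorem pathChain_mul {α X : Type*} [MulAction (FreeGroup α) X] (g h : FreeGroup α) (x : X) :
    pathChain (g * h) x = pathChain h x + pathChain g (h • x) := by
  have := pathPerm_apply (g * h) x (0 : X × α →₀ ZMod 2)
  rw [map_mul, Equiv.Perm.mul_apply, pathPerm_apply, pathPerm_apply] at this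
  have := congrArg Prod.snd this
  simpa using this.symm

theorem pathChain_one {α X : Type*} [MulAction (FreeGroup α) X] (x : X) :
    pathChain (1 : FreeGroup α) x = 0 := by
  simp [pathChain]

theorem pathChain_of {α X : Type*} [MulAction (FreeGroup α) X] (a : α) (x : X) :
    pathChain (FreeGroup.of a) x = Finsupp.single (x, a) 1 := by
  simp [pathChain, pathPerm]

/-- The cycles of the Schreier graph of `F ⧸ H` are spanned by the loops at the base point that
spell generators of `H`. -/
theorem cyclesOn_le_span {α : Type*} (H : Subgroup (FreeGroup α)) (S : Finset (FreeGroup α))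
    (hgen : Subgroup.closure (S : Set (FreeGroup α)) = H)
    (E : Set ((FreeGroup α ⧸ H) × α)) :
    cyclesOn E ≤ Submodule.span (ZMod 2)
      ((fun s => pathChain s ((1 : FreeGroup α) : FreeGroup α ⧸ H)) '' (S : Set (FreeGroup α))) := by
  classical
  set x₀ : FreeGroup α ⧸ H := ((1 : FreeGroup α) : FreeGroup α ⧸ H) with hx₀
  set U := Submodule.span (ZMod 2) ((fun s => pathChain s x₀) '' (S : Set (FreeGroup α))) with hU
  have hfix : ∀ h ∈ H, h • x₀ = x₀ := by
    intro h hh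
    rw [hx₀, MulAction.Quotient.smul_coe, smul_eq_mul, mul_one, QuotientGroup.eq]
    simpa using hh
  -- Chains of loops at the base point are combinations of chains of generators.
  have hloop : ∀ h ∈ H, pathChain h x₀ ∈ U := by
    intro h hh
    rw [← hgen] at hh
    induction hh using Subgroup.closure_induction with
    | mem x hx => exact Submodule.subset_span ⟨x, hx, rfl⟩
    | one => rw [pathChain_one]; exact U.zero_mem
    | mul x y hx hy ihx ihy =>
      rw [pathChain_mul, hfix y (hgen ▸ hy)]
      exact U.add_mem ihy ihx
    | inv x hx ihx =>
      have h1 := pathChain_mul x x⁻¹ x₀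
      rw [mul_inv_cancel, pathChain_one, hfix _ (H.inv_mem (hgen ▸ hx))] at h1
      rw [eq_neg_of_add_eq_zero_left h1.symm]
      exact U.neg_mem ihx
  let r : FreeGroup α ⧸ H → FreeGroup α := Quotient.out
  have hr : ∀ x, r x • x₀ = x := by
    intro x
    rw [hx₀, MulAction.Quotient.smul_coe, smul_eq_mul, mul_one]
    exact Quotient.out_eq x
  -- `Γ` cones a vertex off to the base point along a chosen path, so `z + Γ (∂ z)` is a combination
  -- of loops at the base point.
  let Γ : ((FreeGroup α ⧸ H) →₀ ZMod 2) →ₗ[ZMod 2] ((FreeGroup α ⧸ H) × α →₀ ZMod 2) :=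
    Finsupp.lsum ℕ fun x => LinearMap.toSpanSingleton (ZMod 2) _ (pathChain (r x) x₀)
  have hΓ : ∀ x, Γ (Finsupp.single x 1) = pathChain (r x) x₀ := by
    intro x; simp [Γ]
  have hmain : ∀ z, z + Γ (schreierBoundary α _ z) ∈ U := by
    intro z
    induction z using Finsupp.induction_linear with
    | zero => simp
    | add f g hf hg =>
      rw [map_add, map_add, add_add_add_comm]
      exact U.add_mem hf hg
    | single e t =>
      obtain ⟨x, a⟩ := e
      have hst : Finsupp.single (x, a) t = t • Finsupp.single (x, a) (1 : ZMod 2) := by simp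
      rw [hst, map_smul, map_smul, ← smul_add]
      apply U.smul_mem
      rw [schreierBoundary_single, map_add, hΓ, hΓ]
      set y := FreeGroup.of a • x with hy
      have hh : (r y)⁻¹ * (FreeGroup.of a * r x) ∈ H := by
        have h1 : (FreeGroup.of a * r x) • x₀ = r y • x₀ := by
          rw [mul_smul, hr, hr]
        rw [hx₀, MulAction.Quotient.smul_coe, MulAction.Quotient.smul_coe, smul_eq_mul,
          smul_eq_mul, mul_one, mul_one] at h1
        exact QuotientGroup.eq.1 h1.symm
      have h2 := hloop _ hh
      have h3 : pathChain (r y * ((r y)⁻¹ * (FreeGroup.of a * r x))) x₀ =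
          pathChain (r x) x₀ + Finsupp.single (x, a) 1 := by
        rw [mul_inv_cancel_left, pathChain_mul, hr, pathChain_of]
      rw [pathChain_mul, hfix _ hh] at h3
      have h4 : Finsupp.single (x, a) (1 : ZMod 2) + (pathChain (r x) x₀ + pathChain (r y) x₀) =
          pathChain ((r y)⁻¹ * (FreeGroup.of a * r x)) x₀ := by
        rw [← add_assoc, add_comm (Finsupp.single (x, a) (1 : ZMod 2)), ← h3, add_assoc,
          zmod2_add_self, add_zero]
      rw [h4]
      exact h2
  intro z hz
  have := hmain z
  rwa [LinearMap.mem_ker.1 hz.2, map_zero, add_zero] at this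

/-- The cycle rank of any part of the Schreier graph of `F ⧸ H` is at most the number of generators
of `H`. -/
theorem finrank_cyclesOn_le {α : Type*} (H : Subgroup (FreeGroup α)) (S : Finset (FreeGroup α))
    (hgen : Subgroup.closure (S : Set (FreeGroup α)) = H)
    (E : Set ((FreeGroup α ⧸ H) × α)) :
    Module.finrank (ZMod 2) (cyclesOn E) ≤ S.card := by
  classical
  have h1 := cyclesOn_le_span H S hgen E
  rw [← Finset.coe_image] at h1
  have : Module.Finite (ZMod 2) (Submodule.span (ZMod 2) (↑(Finset.image
    (fun s => pathChain s ((1 : FreeGroup α) : FreeGroup α ⧸ H)) S) :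
      Set ((FreeGroup α ⧸ H) × α →₀ ZMod 2))) := Module.Finite.span_finset _ _
  exact (Submodule.finrank_mono h1).trans
    ((finrank_span_finset_le_card _).trans Finset.card_image_le)

theorem finrank_supported_finset {Y : Type*} (A : Finset Y) :
    Module.finrank (ZMod 2) (Finsupp.supported (ZMod 2) (ZMod 2) (A : Set Y)) = A.card := by
  rw [LinearEquiv.finrank_eq (Finsupp.supportedEquivFinsupp (A : Set Y))]
  simp

instance {Y : Type*} (A : Finset Y) :
    Module.Finite (ZMod 2) (Finsupp.supported (ZMod 2) (ZMod 2) (A : Set Y)) :=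
  Module.Finite.equiv (Finsupp.supportedEquivFinsupp (A : Set Y)).symm

/-- The Euler characteristic bound `|E| - |V| ≤ b₁` for a finite graph with edges `E` whose
endpoints lie in `V`. -/
theorem card_le_finrank_cyclesOn {α X : Type*} [MulAction (FreeGroup α) X]
    (E : Finset (X × α)) (V : Finset X)
    (hE : ∀ e ∈ E, e.1 ∈ V ∧ FreeGroup.of e.2 • e.1 ∈ V) :
    E.card ≤ Module.finrank (ZMod 2) (cyclesOn (E : Set (X × α))) + V.card := by
  let f := (schreierBoundary α X).domRestrict
    (Finsupp.supported (ZMod 2) (ZMod 2) (E : Set (X × α)))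
  have hrange : LinearMap.range f ≤ Finsupp.supported (ZMod 2) (ZMod 2) (V : Set X) := by
    have h1 : Finsupp.supported (ZMod 2) (ZMod 2) (E : Set (X × α)) ≤
        (Finsupp.supported (ZMod 2) (ZMod 2) (V : Set X)).comap (schreierBoundary α X) := by
      rw [Finsupp.supported_eq_span_single, Submodule.span_le]
      rintro _ ⟨⟨x, a⟩, he, rfl⟩
      rw [SetLike.mem_coe, Submodule.mem_comap, schreierBoundary_single]
      exact Submodule.add_mem _ (Finsupp.single_mem_supported _ _ (hE _ he).1)
        (Finsupp.single_mem_supported _ _ (hE _ he).2)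
    rintro _ ⟨z, rfl⟩
    exact h1 z.2
  have hker : Module.finrank (ZMod 2) (LinearMap.ker f) =
      Module.finrank (ZMod 2) (cyclesOn (E : Set (X × α))) := by
    have h2 : cyclesOn (E : Set (X × α)) = (LinearMap.ker f).map (Submodule.subtype _) := by
      ext z
      simp [cyclesOn, f, and_comm]
    rw [h2]
    exact (LinearEquiv.finrank_eq (Submodule.equivSubtypeMap _ _))
  have h3 := LinearMap.finrank_range_add_finrank_ker (K := ZMod 2)
    (V := Finsupp.supported (ZMod 2) (ZMod 2) (E : Set (X × α))) (V₂ := X →₀ ZMod 2) f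
  have h4 := Submodule.finrank_mono hrange
  rw [finrank_supported_finset] at h3 h4
  omega

/-! ### Stacked words and their circles -/

/-- The group element of a letter: `(a, true)` stands for `a` and `(a, false)` for `a⁻¹`. -/
def letterElt {α : Type*} (p : α × Bool) : FreeGroup α :=
  if p.2 then FreeGroup.of p.1 else (FreeGroup.of p.1)⁻¹

/-- A cyclic word without cancellation, with a linear order on its set of positions `I` that makes
it a stacking: at two steps whose letters belong to the same generator, the starting points of the
corresponding oriented edges are ordered in the same way as their end points. -/
structure StackedWord (α I : Type*) [LinearOrder I] where
  /-- the cyclic successor of a position -/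
  next : Equiv.Perm I
  /-- the letter read in the step from `i` to `next i` -/
  letter : I → α × Bool
  /-- the word is a single cycle -/
  sameCycle : ∀ i j, next.SameCycle i j
  /-- a letter is never followed by its inverse -/
  noBack : ∀ i, (letter (next i)).1 = (letter i).1 → (letter (next i)).2 = (letter i).2
  /-- oriented edges with the same label do not cross -/
  compat : ∀ i j, (letter i).1 = (letter j).1 →
    ((if (letter i).2 then i else next i) < (if (letter j).2 then j else next j) ↔
      (if (letter i).2 then next i else i) < (if (letter j).2 then next j else j))

namespace StackedWord

variable {α I X : Type*} [LinearOrder I] [MulAction (FreeGroup α) X] (W : StackedWord α I)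

/-- The position over the initial vertex of the oriented edge traversed in the step from `i` to
`next i`: this is `next i` if the edge is traversed backwards. -/
def near (i : I) : I := if (W.letter i).2 then i else W.next i

/-- The position over the terminal vertex of the oriented edge traversed in the step from `i` to
`next i`. -/
def far (i : I) : I := if (W.letter i).2 then W.next i else i

theorem near_lt_near {i j : I} (h : (W.letter i).1 = (W.letter j).1) :
    W.near i < W.near j ↔ W.far i < W.far j := W.compat i j h

theorem near_le_near {i j : I} (h : (W.letter i).1 = (W.letter j).1) :
    W.near i ≤ W.near j ↔ W.far i ≤ W.far j := by
  rw [← not_lt, ← not_lt, W.near_lt_near h.symm]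

/-- The position `near i` and the generator read determine the step `i`, because the word does not
backtrack. -/
theorem near_injective {i j : I} (h : (W.letter i).1 = (W.letter j).1)
    (hn : W.near i = W.near j) : i = j := by
  unfold near at hn
  have h1 := W.noBack i
  have h2 := W.noBack j
  split_ifs at hn with hi hj hj
  · exact hn
  · subst hn
    exact absurd (h2 h) (by simp_all)
  · subst hn
    exact absurd (h1 h.symm) (by simp_all)
  · exact W.next.injective hn

/-- One step of reading the word: `(x, i)` means that the reading is at the vertex `x` and at the
position `i`. Its finite cycles are the circles of the fibre product. -/
def advance (X : Type*) [MulAction (FreeGroup α) X] : Equiv.Perm (X × I) where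
  toFun p := (letterElt (W.letter p.2) • p.1, W.next p.2)
  invFun p := ((letterElt (W.letter (W.next.symm p.2)))⁻¹ • p.1, W.next.symm p.2)
  left_inv p := by simp
  right_inv p := by simp

@[simp] theorem advance_apply (p : X × I) :
    W.advance X p = (letterElt (W.letter p.2) • p.1, W.next p.2) := rfl

/-- The edge of the Schreier graph traversed in the step that starts at `p`. -/
def edge (p : X × I) : X × α :=
  (if (W.letter p.2).2 then p.1 else (FreeGroup.of (W.letter p.2).1)⁻¹ • p.1, (W.letter p.2).1)

theorem nearPt_eq (p : X × I) :
    ((W.edge p).1, W.near p.2) = if (W.letter p.2).2 then p else W.advance X p := by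
  by_cases h : (W.letter p.2).2 <;> simp [edge, near, h, letterElt]

theorem farPt_eq (p : X × I) :
    (FreeGroup.of (W.edge p).2 • (W.edge p).1, W.far p.2) =
      if (W.letter p.2).2 then W.advance X p else p := by
  by_cases h : (W.letter p.2).2 <;> simp [edge, far, h, letterElt]

theorem eq_of_edge_eq {p q : X × I} (h : W.edge p = W.edge q) (hn : W.near p.2 = W.near q.2) :
    p = q := by
  have h2 : p.2 = q.2 := W.near_injective (congrArg Prod.snd h) hn
  have h1 := congrArg Prod.fst h
  simp only [edge, h2] at h1
  split_ifs at h1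
  · exact Prod.ext h1 h2
  · exact Prod.ext (smul_left_cancel _ h1) h2

variable (Ω : Finset (X × I))

/-- The step starting at `p` is the highest among the steps of `Ω` over the same edge.  By
compatibility it does not matter at which endpoint of the edge heights are compared. -/
def IsTop (p : X × I) : Prop := p ∈ Ω ∧ ∀ q ∈ Ω, W.edge q = W.edge p → W.near q.2 ≤ W.near p.2

variable {Ω}

theorem nearPt_mem (hΩ : ∀ p ∈ Ω, W.advance X p ∈ Ω) {p : X × I} (hp : p ∈ Ω) :
    ((W.edge p).1, W.near p.2) ∈ Ω := by
  rw [nearPt_eq]; split_ifs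
  exacts [hp, hΩ p hp]

theorem farPt_mem (hΩ : ∀ p ∈ Ω, W.advance X p ∈ Ω) {p : X × I} (hp : p ∈ Ω) :
    (FreeGroup.of (W.edge p).2 • (W.edge p).1, W.far p.2) ∈ Ω := by
  rw [farPt_eq]; split_ifs
  exacts [hΩ p hp, hp]

/-- If `r` is the highest point of `Ω` over its vertex, both the step that starts at `r` and the one
that ends at `r` are top. -/
theorem isTop_of_max_endpoint (hΩ : ∀ p ∈ Ω, W.advance X p ∈ Ω) {p r : X × I} (hp : p ∈ Ω)
    (hr : r = p ∨ r = W.advance X p) (h : ∀ j, (r.1, j) ∈ Ω → j ≤ r.2) : W.IsTop Ω p := by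
  have hcases : ((W.edge p).1, W.near p.2) = r ∨
      (FreeGroup.of (W.edge p).2 • (W.edge p).1, W.far p.2) = r := by
    rw [nearPt_eq, farPt_eq]
    split_ifs
    · exact hr.imp Eq.symm Eq.symm
    · exact (hr.imp Eq.symm Eq.symm).symm
  rcases hcases with rfl | rfl
  · exact ⟨hp, fun _ hq he => h _ (he ▸ W.nearPt_mem hΩ hq)⟩
  · exact ⟨hp, fun _ hq he => (W.near_le_near (congrArg Prod.snd he)).2
      (h _ (he ▸ W.farPt_mem hΩ hq))⟩

/-- A top step at the lowest position is the only step over its edge: it is at once the highest and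
the lowest. -/
theorem eq_of_isTop_of_min {p : X × I} (hp : W.IsTop Ω p) (hmin : ∀ i, p.2 ≤ i)
    {q : X × I} (hq : q ∈ Ω) (he : W.edge q = W.edge p) : q = p := by
  refine W.eq_of_edge_eq he (le_antisymm (hp.2 q hq he) ?_)
  by_cases hb : (W.letter p.2).2
  · have : W.near p.2 = p.2 := by simp [near, hb]
    rw [this]; exact hmin _
  · have : W.far p.2 = p.2 := by simp [far, hb]
    rw [W.near_le_near (congrArg Prod.snd he).symm, this]; exact hmin _

theorem exists_sameCycle_index (p : X × I) (i : I) :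
    ∃ q, (W.advance X).SameCycle p q ∧ q.2 = i := by
  obtain ⟨n, hn⟩ := W.sameCycle p.2 i
  refine ⟨(W.advance X ^ n) p, ⟨n, rfl⟩, ?_⟩
  rw [← hn]
  have hnat : ∀ (m : ℕ) (r : X × I), ((W.advance X ^ m) r).2 = (W.next ^ m) r.2 := by
    intro m
    induction m with
    | zero => simp
    | succ m ih => intro r; rw [pow_succ, pow_succ, Equiv.Perm.mul_apply, ih]; simp
  obtain ⟨m, rfl | rfl⟩ := n.eq_nat_or_neg
  · simpa using hnat m p
  · have h1 := hnat m ((W.advance X ^ (-(m : ℤ))) p)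
    rw [← Equiv.Perm.mul_apply, zpow_neg, zpow_natCast, mul_inv_cancel] at h1
    rw [zpow_neg, zpow_neg, zpow_natCast, zpow_natCast, Equiv.Perm.eq_inv_iff_eq]
    exact h1.symm

end StackedWord

/-- A cycle that meets both `T` and its complement contains a point of `T` whose predecessor is not
in `T`. -/
theorem exists_mem_notMem_symm {Y : Type*} (τ : Equiv.Perm Y) (O : Finset Y) (y₀ : Y)
    (hO : ∀ y, y ∈ O ↔ τ.SameCycle y₀ y) (T : Set Y) {a b : Y} (ha : a ∈ O) (hb : b ∈ O)
    (haT : a ∈ T) (hbT : b ∉ T) : ∃ y ∈ O, y ∈ T ∧ τ.symm y ∉ T := by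
  classical
  by_contra hcon
  push Not at hcon
  set A := O.filter (· ∈ T) with hA
  have hmaps : Set.MapsTo (τ⁻¹ : Equiv.Perm Y) A A := by
    intro y hy
    rw [Finset.mem_coe, hA, Finset.mem_filter] at hy ⊢
    exact ⟨(hO _).2 (((hO y).1 hy.1).trans (by
      simpa [Equiv.Perm.inv_def] using Equiv.Perm.SameCycle.refl τ y)), hcon y hy.1 hy.2⟩
  have hbij : Set.BijOn (τ⁻¹ : Equiv.Perm Y) A A :=
    ⟨hmaps, (τ⁻¹).injective.injOn,
      Finset.surjOn_of_injOn_of_card_le _ hmaps (τ⁻¹).injective.injOn le_rfl⟩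
  have hab : τ.SameCycle a b := ((hO a).1 ha).symm.trans ((hO b).1 hb)
  have hab' : (τ⁻¹).SameCycle a b := Equiv.Perm.sameCycle_inv.2 hab
  obtain ⟨n, rfl⟩ := hab'
  have : ((τ⁻¹) ^ n) a ∈ (A : Set Y) :=
    (hbij.perm_zpow n).mapsTo (by rw [Finset.mem_coe, hA, Finset.mem_filter]; exact ⟨ha, haT⟩)
  rw [Finset.mem_coe, hA, Finset.mem_filter] at this
  exact hbT this.2

/-! ### Counting circles -/

instance {α X : Type*} [MulAction (FreeGroup α) X] (E : Finset (X × α)) :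
    Module.Finite (ZMod 2) (cyclesOn (E : Set (X × α))) :=
  Submodule.finiteDimensional_of_le (S₂ := Finsupp.supported (ZMod 2) (ZMod 2) (E : Set (X × α)))
    inf_le_left

open Classical in
/-- The number of circles of a stacked word is at most the cycle rank of the graph they cover. -/
theorem StackedWord.card_le_finrank {α I X κ : Type*} [LinearOrder I] [Finite I] [Nonempty I]
    [MulAction (FreeGroup α) X] (W : StackedWord α I) (z : κ → X × I) (O : κ → Finset (X × I))
    (hO : ∀ j p, p ∈ O j ↔ (W.advance X).SameCycle (z j) p)
    (hdisj : ∀ i j, i ≠ j → Disjoint (O i) (O j)) (J : Finset κ) :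
    J.card ≤ Module.finrank (ZMod 2)
      (cyclesOn (((J.biUnion O).image W.edge : Finset (X × α)) : Set (X × α))) := by
  induction J using Finset.strongInduction with
  | H J ih =>
  set Ω := J.biUnion O with hΩdef
  set E := Ω.image W.edge with hE
  have hOadv : ∀ j, ∀ p, p ∈ O j ↔ W.advance X p ∈ O j := fun j p => by
    rw [hO, hO, Equiv.Perm.sameCycle_apply_right]
  have hΩ' : ∀ p, p ∈ Ω ↔ W.advance X p ∈ Ω := by
    intro p
    rw [hΩdef, Finset.mem_biUnion, Finset.mem_biUnion]
    simp only [← hOadv]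
  have hΩ : ∀ p ∈ Ω, W.advance X p ∈ Ω := fun p hp => (hΩ' p).1 hp
  -- A circle of top steps only is the sole one over the edge at its lowest position, so deleting it
  -- loses the cycle `c` that it carries.
  by_cases hfull : ∃ j ∈ J, ∀ p ∈ O j, W.IsTop Ω p
  · obtain ⟨j, hj, hfull⟩ := hfull
    obtain ⟨i₁, hi₁⟩ := Finite.exists_min (id : I → I)
    obtain ⟨p, hpc, hpi⟩ := W.exists_sameCycle_index (z j) i₁
    have hp : p ∈ O j := (hO j p).2 hpc
    have huniq : ∀ q ∈ Ω, W.edge q = W.edge p → q = p := fun q hq he =>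
      W.eq_of_isTop_of_min (hfull p hp) (fun i => hpi ▸ hi₁ i) hq he
    have hss : J.erase j ⊂ J := Finset.erase_ssubset hj
    have hIH := ih _ hss
    set E' := ((J.erase j).biUnion O).image W.edge with hE'
    have hpΩ : p ∈ Ω := (hfull p hp).1
    have hpE' : W.edge p ∉ E' := by
      intro h
      obtain ⟨q, hq, hqe⟩ := Finset.mem_image.1 h
      obtain ⟨j', hj', hqj'⟩ := Finset.mem_biUnion.1 hq
      have hqp := huniq q (Finset.mem_biUnion.2 ⟨j', Finset.mem_of_mem_erase hj', hqj'⟩) hqe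
      subst hqp
      exact Finset.disjoint_left.1 (hdisj j j' (Finset.ne_of_mem_erase hj').symm) hp hqj'
    let c : X × α →₀ ZMod 2 := ∑ q ∈ O j, Finsupp.single (W.edge q) 1
    have hcp : c (W.edge p) = 1 := by
      rw [Finsupp.finsetSum_apply, Finset.sum_eq_single_of_mem p hp]
      · simp
      · intro q hq hqp
        refine Finsupp.single_eq_of_ne fun he => hqp ?_
        exact huniq q (Finset.mem_biUnion.2 ⟨j, hj, hq⟩) he.symm
    have hbdry : ∀ q : X × I, schreierBoundary α X (Finsupp.single (W.edge q) 1) =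
        Finsupp.single q.1 1 + Finsupp.single (W.advance X q).1 1 := by
      intro q
      have h1 := congrArg Prod.fst (W.nearPt_eq q)
      have h2 := congrArg Prod.fst (W.farPt_eq q)
      rw [show W.edge q = ((W.edge q).1, (W.edge q).2) from rfl, schreierBoundary_single]
      simp only at h1 h2
      rw [h2, h1]
      split_ifs
      · rfl
      · exact add_comm _ _
    have hcE : c ∈ cyclesOn (E : Set (X × α)) := by
      refine ⟨Submodule.sum_mem _ fun q hq => Finsupp.single_mem_supported _ _ ?_, ?_⟩
      · exact Finset.mem_image_of_mem _ (Finset.mem_biUnion.2 ⟨j, hj, hq⟩)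
      · have hre : ∑ q ∈ O j, Finsupp.single (W.advance X q).1 (1 : ZMod 2) =
            ∑ q ∈ O j, Finsupp.single q.1 1 :=
          Finset.sum_equiv (W.advance X) (fun q => hOadv j q) (fun q _ => rfl)
        rw [SetLike.mem_coe, LinearMap.mem_ker, map_sum]
        simp only [hbdry]
        rw [Finset.sum_add_distrib, hre, zmod2_add_self]
    have hlt : cyclesOn (E' : Set (X × α)) < cyclesOn (E : Set (X × α)) := by
      refine lt_of_le_of_ne (inf_le_inf_right _ (Finsupp.supported_mono ?_)) fun heq => ?_
      · exact Finset.coe_subset.2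
          (Finset.image_subset_image (Finset.biUnion_subset_biUnion_of_subset_left _ hss.1))
      · rw [← heq] at hcE
        have h0 := (Finsupp.mem_supported' _ _).1 hcE.1 (W.edge p) hpE'
        rw [hcp] at h0
        exact one_ne_zero h0
    have := Submodule.finrank_lt_finrank_of_lt hlt
    rw [Finset.card_erase_of_mem hj] at hIH
    omega
  · push Not at hfull
    -- Otherwise the top steps in `A`, whose predecessors are top, are at least as many as the
    -- vertices, and those in `B`, whose predecessors are not, at least as many as the circles.
    let V := Ω.image Prod.fst
    let Top := Ω.filter (W.IsTop Ω)
    let A := Top.filter fun p => (W.advance X).symm p ∈ Top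
    let B := Top.filter fun p => ¬ (W.advance X).symm p ∈ Top
    have hmemTop : ∀ p, p ∈ Top ↔ W.IsTop Ω p := fun p =>
      Finset.mem_filter.trans ⟨fun h => h.2, fun h => ⟨h.1, h⟩⟩
    have h1 : E.card ≤ Module.finrank (ZMod 2) (cyclesOn (E : Set (X × α))) + V.card := by
      apply card_le_finrank_cyclesOn
      intro e he
      obtain ⟨p, hp, rfl⟩ := Finset.mem_image.1 he
      exact ⟨Finset.mem_image.2 ⟨_, W.nearPt_mem hΩ hp, rfl⟩,
        Finset.mem_image.2 ⟨_, W.farPt_mem hΩ hp, rfl⟩⟩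
    have h2 : Top.card ≤ E.card := by
      refine Finset.card_le_card_of_injOn W.edge
        (fun p hp => Finset.mem_image_of_mem _ ((hmemTop p).1 hp).1) ?_
      intro p hp q hq he
      have hp' := (hmemTop p).1 hp
      have hq' := (hmemTop q).1 hq
      exact W.eq_of_edge_eq he (le_antisymm (hq'.2 p hp'.1 he) (hp'.2 q hq'.1 he.symm))
    have h3 : A.card + B.card = Top.card := Finset.card_filter_add_card_filter_not _
    have h4 : V.card ≤ A.card := by
      refine (Finset.card_le_card (t := A.image Prod.fst) fun x hx => ?_).trans
        Finset.card_image_le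
      obtain ⟨q, hq, rfl⟩ := Finset.mem_image.1 hx
      obtain ⟨p, hp, hpmax⟩ := Finset.exists_max_image (Ω.filter fun p => p.1 = q.1) Prod.snd
        ⟨q, Finset.mem_filter.2 ⟨hq, rfl⟩⟩
      obtain ⟨hpΩ, hpq⟩ := Finset.mem_filter.1 hp
      have hmax : ∀ j, (p.1, j) ∈ Ω → j ≤ p.2 := fun j hj =>
        hpmax (p.1, j) (Finset.mem_filter.2 ⟨hj, hpq⟩)
      refine Finset.mem_image.2 ⟨p, Finset.mem_filter.2 ⟨(hmemTop p).2 ?_, (hmemTop _).2 ?_⟩, hpq⟩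
      · exact W.isTop_of_max_endpoint hΩ hpΩ (Or.inl rfl) hmax
      · refine W.isTop_of_max_endpoint hΩ ((hΩ' _).2 ?_) (r := p) (Or.inr ?_) hmax
        · rwa [Equiv.apply_symm_apply]
        · rw [Equiv.apply_symm_apply]
    have h5 : J.card ≤ B.card := by
      have hex : ∀ j, ∃ y, j ∈ J → y ∈ O j ∧ y ∈ B := by
        intro j
        by_cases hj : j ∈ J
        swap
        · exact ⟨z j, fun h => absurd h hj⟩
        obtain ⟨b, hb, hbT⟩ := hfull j hj
        obtain ⟨i₀, hi₀⟩ := Finite.exists_max (id : I → I)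
        obtain ⟨a, hac, hai⟩ := W.exists_sameCycle_index (z j) i₀
        have ha : a ∈ O j := (hO j a).2 hac
        have haT : W.IsTop Ω a := W.isTop_of_max_endpoint hΩ
          (Finset.mem_biUnion.2 ⟨j, hj, ha⟩) (Or.inl rfl) fun i _ => hai ▸ hi₀ i
        obtain ⟨y, hy, hyT, hyT'⟩ := exists_mem_notMem_symm (W.advance X) (O j) (z j) (hO j)
          {p | W.IsTop Ω p} ha hb haT hbT
        exact ⟨y, fun _ => ⟨hy, Finset.mem_filter.2
          ⟨(hmemTop y).2 hyT, fun h => hyT' ((hmemTop _).1 h)⟩⟩⟩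
      choose f hf using hex
      refine Finset.card_le_card_of_injOn f (fun i hi => (hf i hi).2) fun i hi j hj hij => ?_
      by_contra hne
      exact Finset.disjoint_left.1 (hdisj i j hne) (hf i hi).1 (hij ▸ (hf j hj).1)
    omega

/-! ### Orders on cosets of a maximal cyclic subgroup -/

/-- `K` is free, and of rank at least two because it contains `w`, which is not a proper power, and
is not contained in `⟨w⟩`; a suitable combination of
two coordinate homomorphisms kills `w`. -/
theorem exists_hom_of_not_le_zpowers {α : Type*} (w : FreeGroup α)
    (hpp : ∀ (u : FreeGroup α) (m : ℤ), w = u ^ m → m = 1 ∨ m = -1)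
    (K : Subgroup (FreeGroup α)) (hwK : w ∈ K) (hK : ¬ K ≤ Subgroup.zpowers w) :
    ∃ φ : K →* Multiplicative ℤ, φ ⟨w, hwK⟩ = 1 ∧ φ ≠ 1 := by
  classical
  let e : K ≃* FreeGroup (IsFreeGroup.Generators K) := IsFreeGroup.toFreeGroup K
  by_cases hsub : Subsingleton (IsFreeGroup.Generators K)
  · exfalso
    have hcyc : ∃ u : K, ∀ x : K, x ∈ Subgroup.zpowers u := by
      have key : ∃ v : FreeGroup (IsFreeGroup.Generators K), ∀ x, x ∈ Subgroup.zpowers v := by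
        rcases isEmpty_or_nonempty (IsFreeGroup.Generators K) with h | ⟨⟨a⟩⟩
        · exact ⟨1, fun x => by rw [Subsingleton.elim x 1]; exact one_mem _⟩
        · refine ⟨FreeGroup.of a, fun x => ?_⟩
          have hx : x ∈ Subgroup.closure
              (Set.range (FreeGroup.of : IsFreeGroup.Generators K → _)) := by
            rw [FreeGroup.closure_range_of]; trivial
          refine (Subgroup.closure_le _).2 ?_ hx
          rintro _ ⟨b, rfl⟩
          rw [Subsingleton.elim b a]
          exact Subgroup.mem_zpowers _
      obtain ⟨v, hv⟩ := key
      refine ⟨e.symm v, fun x => ?_⟩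
      obtain ⟨m, hm⟩ := hv (e x)
      refine ⟨m, ?_⟩
      apply e.injective
      simpa using hm
    obtain ⟨u, hu⟩ := hcyc
    obtain ⟨m, hm⟩ := hu ⟨w, hwK⟩
    have hm' : w = (u : FreeGroup α) ^ m := by
      have := congrArg Subtype.val hm
      simpa using this.symm
    apply hK
    intro x hx
    obtain ⟨r, hr⟩ := hu ⟨x, hx⟩
    have hr' : x = (u : FreeGroup α) ^ r := by
      have := congrArg Subtype.val hr
      simpa using this.symm
    have huw : (u : FreeGroup α) ∈ Subgroup.zpowers w := by
      rcases hpp _ _ hm' with h | h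
      · rw [hm', h, zpow_one]; exact Subgroup.mem_zpowers _
      · rw [hm', h, zpow_neg_one, Subgroup.zpowers_inv]; exact Subgroup.mem_zpowers _
    rw [hr']
    exact Subgroup.zpow_mem _ huw r
  · rw [not_subsingleton_iff_nontrivial] at hsub
    obtain ⟨a, b, hab⟩ := hsub
    let E : IsFreeGroup.Generators K → (K →* Multiplicative ℤ) := fun a =>
      (FreeGroup.lift (Pi.mulSingle a (Multiplicative.ofAdd (1 : ℤ)))).comp e.toMonoidHom
    have hE1 : ∀ a, E a (e.symm (FreeGroup.of a)) = Multiplicative.ofAdd 1 := by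
      intro a; simp [E]
    have hE2 : ∀ a b, a ≠ b → E a (e.symm (FreeGroup.of b)) = 1 := by
      intro a b h; simp [E, Pi.mulSingle_eq_of_ne' h]
    by_cases h0 : E a ⟨w, hwK⟩ = 1
    · refine ⟨E a, h0, fun h => ?_⟩
      have := hE1 a
      rw [h] at this
      exact absurd (congrArg Multiplicative.toAdd this) (by simp)
    · set p := Multiplicative.toAdd (E a ⟨w, hwK⟩) with hp
      set q := Multiplicative.toAdd (E b ⟨w, hwK⟩) with hq
      refine ⟨E a ^ q * (E b ^ p)⁻¹, ?_, fun h => ?_⟩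
      · apply Multiplicative.toAdd.injective
        simp [← hp, ← hq, mul_comm]
      · have := DFunLike.congr_fun h (e.symm (FreeGroup.of b))
        simp only [MonoidHom.mul_apply, MonoidHom.zpow_apply, MonoidHom.inv_apply, hE1,
          hE2 a b hab] at this
        have := congrArg Multiplicative.toAdd this
        simp at this
        exact h0 (Multiplicative.toAdd.injective this)

/-- There is a `⟨w⟩`-biinvariant positive cone that decides the sign of every element of the finite
set `T` outside `⟨w⟩`.  It is lexicographic: elements of the subgroup `K` generated by `w` and `T`
are compared by a homomorphism `φ : K → ℤ` killing `w`, and the elements of `T` in the kernel of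
`φ` are left to the induction. -/
theorem exists_cone {α : Type*} (w : FreeGroup α)
    (hpp : ∀ (u : FreeGroup α) (m : ℤ), w = u ^ m → m = 1 ∨ m = -1)
    (T : Finset (FreeGroup α)) :
    ∃ P : Set (FreeGroup α), (∀ x ∈ P, ∀ y ∈ P, x * y ∈ P) ∧
      (∀ x ∈ P, ∀ c ∈ Subgroup.zpowers w, c * x ∈ P ∧ x * c ∈ P) ∧
      (∀ x ∈ P, x ∉ Subgroup.zpowers w) ∧
      ∀ t ∈ T, t ∈ Subgroup.zpowers w ∨ t ∈ P ∨ t⁻¹ ∈ P := by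
  classical
  induction T using Finset.strongInduction with
  | H T ih =>
    by_cases hT : ∀ t ∈ T, t ∈ Subgroup.zpowers w
    · exact ⟨∅, by simp, by simp, by simp, fun t ht => Or.inl (hT t ht)⟩
    push Not at hT
    obtain ⟨t₀, ht₀, ht₀'⟩ := hT
    set K : Subgroup (FreeGroup α) := Subgroup.closure (insert w (T : Set (FreeGroup α))) with hKdef
    have hwK : w ∈ K := Subgroup.subset_closure (by simp)
    have hTK : ∀ t ∈ T, t ∈ K := fun t ht => Subgroup.subset_closure (by simp [ht])
    obtain ⟨φ, hφw, hφ⟩ := exists_hom_of_not_le_zpowers w hpp K hwK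
      (fun h => ht₀' (h (hTK _ ht₀)))
    have hCK : ∀ c ∈ Subgroup.zpowers w, ∃ h : c ∈ K, φ ⟨c, h⟩ = 1 := by
      rintro _ ⟨m, rfl⟩
      refine ⟨K.zpow_mem hwK m, ?_⟩
      have : (⟨w ^ m, K.zpow_mem hwK m⟩ : K) = ⟨w, hwK⟩ ^ m := by ext; simp
      change φ ⟨w ^ m, _⟩ = 1
      rw [this, map_zpow, hφw, one_zpow]
    -- Some element of `T` has nonzero image, so the kernel part of `T` is strictly smaller.
    have hex : ∃ t, ∃ ht : t ∈ T, φ ⟨t, hTK t ht⟩ ≠ 1 := by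
      by_contra hcon
      push Not at hcon
      apply hφ
      have hle : K ≤ φ.ker.map K.subtype := by
        refine (Subgroup.closure_le _).2 fun x hx => ?_
        rcases hx with rfl | hx
        · exact ⟨⟨x, hwK⟩, hφw, rfl⟩
        · exact ⟨⟨x, hTK x hx⟩, hcon x hx, rfl⟩
      ext x
      obtain ⟨y, hy, hyx⟩ := hle x.2
      have : y = x := Subtype.ext hyx
      subst this
      simpa using hy
    obtain ⟨t₁, ht₁, hφt₁⟩ := hex
    obtain ⟨P₀, hmul, hC, hdisj, htot⟩ := ih
      (T.filter fun t => ∃ h : t ∈ K, φ ⟨t, h⟩ = 1) (by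
        refine Finset.filter_ssubset.2 ⟨t₁, ht₁, ?_⟩
        rintro ⟨h, h'⟩
        exact hφt₁ h')
    refine ⟨{x | (x ∈ P₀ ∧ ∃ h : x ∈ K, φ ⟨x, h⟩ = 1) ∨ ∃ h : x ∈ K, 1 < φ ⟨x, h⟩},
      ?_, ?_, ?_, ?_⟩
    · have hm : ∀ x y (hx : x ∈ K) (hy : y ∈ K),
          φ ⟨x * y, K.mul_mem hx hy⟩ = φ ⟨x, hx⟩ * φ ⟨y, hy⟩ := fun x y hx hy => by
        rw [← map_mul]; rfl
      rintro x (⟨hx, hxK, hx1⟩ | ⟨hxK, hx1⟩) y (⟨hy, hyK, hy1⟩ | ⟨hyK, hy1⟩)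
      · exact Or.inl ⟨hmul x hx y hy, K.mul_mem hxK hyK, by rw [hm x y hxK hyK, hx1, hy1, one_mul]⟩
      · exact Or.inr ⟨K.mul_mem hxK hyK, by rw [hm x y hxK hyK, hx1, one_mul]; exact hy1⟩
      · exact Or.inr ⟨K.mul_mem hxK hyK, by rw [hm x y hxK hyK, hy1, mul_one]; exact hx1⟩
      · exact Or.inr ⟨K.mul_mem hxK hyK, by rw [hm x y hxK hyK]; exact one_lt_mul' hx1 hy1⟩
    · have hm : ∀ x y (hx : x ∈ K) (hy : y ∈ K),
          φ ⟨x * y, K.mul_mem hx hy⟩ = φ ⟨x, hx⟩ * φ ⟨y, hy⟩ := fun x y hx hy => by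
        rw [← map_mul]; rfl
      rintro x hx c hc
      obtain ⟨hcK, hc1⟩ := hCK c hc
      rcases hx with ⟨hx, hxK, hx1⟩ | ⟨hxK, hx1⟩
      · exact ⟨Or.inl ⟨(hC x hx c hc).1, K.mul_mem hcK hxK,
          by rw [hm c x hcK hxK, hx1, hc1, one_mul]⟩,
          Or.inl ⟨(hC x hx c hc).2, K.mul_mem hxK hcK, by rw [hm x c hxK hcK, hx1, hc1, one_mul]⟩⟩
      · exact ⟨Or.inr ⟨K.mul_mem hcK hxK, by rw [hm c x hcK hxK, hc1, one_mul]; exact hx1⟩,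
          Or.inr ⟨K.mul_mem hxK hcK, by rw [hm x c hxK hcK, hc1, mul_one]; exact hx1⟩⟩
    · rintro x (⟨hx, -⟩ | ⟨hxK, hx1⟩) hxC
      · exact hdisj x hx hxC
      · obtain ⟨h, h'⟩ := hCK x hxC
        rw [h'] at hx1
        exact lt_irrefl _ hx1
    · intro t ht
      have htK := hTK t ht
      rcases lt_trichotomy (φ ⟨t, htK⟩) 1 with h | h | h
      · refine Or.inr (Or.inr (Or.inr ⟨K.inv_mem htK, ?_⟩))
        have : φ ⟨t⁻¹, K.inv_mem htK⟩ = (φ ⟨t, htK⟩)⁻¹ := by rw [← map_inv]; rfl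
        rw [this]
        exact one_lt_inv'.2 h
      · rcases htot t (Finset.mem_filter.2 ⟨ht, htK, h⟩) with h' | h' | h'
        · exact Or.inl h'
        · exact Or.inr (Or.inl (Or.inl ⟨h', htK, h⟩))
        · refine Or.inr (Or.inr (Or.inl ⟨h', K.inv_mem htK, ?_⟩))
          have : φ ⟨t⁻¹, K.inv_mem htK⟩ = (φ ⟨t, htK⟩)⁻¹ := by rw [← map_inv]; rfl
          rw [this, h, inv_one]
      · exact Or.inr (Or.inl (Or.inr ⟨htK, h⟩))

/-! ### Stacking a cyclically reduced word -/

theorem letterElt_eq_inv {α : Type*} (y : α × Bool) :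
    letterElt (y.1, !y.2) = (FreeGroup.mk [y])⁻¹ := by
  obtain ⟨a, b⟩ := y
  cases b <;> simp [letterElt, FreeGroup.of, FreeGroup.inv_mk, FreeGroup.invRev]

open FreeGroup in
/-- Distinct proper prefixes `A` and `A B` of a cyclically reduced word `L = A B D` satisfy
`A B A⁻¹ ∉ ⟨L⟩`.  Otherwise `B` would be a power of the cyclic conjugate `R = B D A` of `L`, which
is impossible by comparing lengths: powers of `R` are reduced and `0 < |B| < |R|`. -/
theorem prefix_conj_notMem {α : Type*} (A B D : List (α × Bool)) (hB : B ≠ []) (hD : D ≠ [])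
    (hL : IsCyclicallyReduced (A ++ B ++ D)) :
    mk (A ++ B) * (mk A)⁻¹ ∉ Subgroup.zpowers (mk (A ++ B ++ D)) := by
  classical
  rintro ⟨s, hs⟩
  set R := B ++ D ++ A with hR
  have hmkR : ∀ n : ℕ, (mk R) ^ n = mk (List.replicate n R).flatten := by
    intro n
    induction n with
    | zero => simp [one_eq_mk]
    | succ n ih => rw [pow_succ', ih, mul_mk, List.replicate_succ, List.flatten_cons]
  have hshift : ∀ n : ℕ, A ++ (List.replicate n R).flatten =
      (List.replicate n (A ++ B ++ D)).flatten ++ A := by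
    intro n
    induction n with
    | zero => simp
    | succ n ih =>
      rw [List.replicate_succ, List.flatten_cons, List.replicate_succ, List.flatten_cons,
        List.append_assoc (A ++ B ++ D), ← ih]
      simp [hR]
  have hred : ∀ n : ℕ, IsReduced (List.replicate n R).flatten := by
    intro n
    refine (hL.flatten_replicate (n + 1)).isReduced.infix ⟨A, B ++ D, ?_⟩
    rw [hshift, List.replicate_succ', List.flatten_concat]
    simp
  have hconj : mk B = mk R ^ s := by
    have h1 : mk R = (mk A)⁻¹ * mk (A ++ B ++ D) * mk A := by
      simp only [hR, ← mul_mk]; group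
    have h2 : mk B = (mk A)⁻¹ * (mk (A ++ B) * (mk A)⁻¹) * mk A := by
      simp only [← mul_mk]; group
    rw [h1, h2, ← hs]
    have := conj_zpow (i := s) (a := (mk A)⁻¹) (b := mk (A ++ B ++ D))
    rw [inv_inv] at this
    exact this.symm
  have hnormB : FreeGroup.norm (mk B) = B.length := by
    have : IsReduced B := hL.isReduced.infix ⟨A, D, rfl⟩
    rw [FreeGroup.norm, toWord_mk, this.reduce_eq]
  have hnormR : ∀ n : ℕ, FreeGroup.norm (mk R ^ n) = n * R.length := by
    intro n
    rw [hmkR, FreeGroup.norm, toWord_mk, (hred n).reduce_eq]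
    simp
  have hlen : R.length = B.length + D.length + A.length := by simp [hR]; ring
  have hBpos := List.length_pos_of_ne_nil hB
  have hDpos := List.length_pos_of_ne_nil hD
  have hfin : ∃ n : ℕ, B.length = n * R.length := by
    obtain ⟨n, rfl | rfl⟩ := s.eq_nat_or_neg
    · exact ⟨n, by rw [← hnormB, hconj, zpow_natCast, hnormR]⟩
    · exact ⟨n, by rw [← hnormB, hconj, zpow_neg, FreeGroup.norm_inv_eq, zpow_natCast, hnormR]⟩
  obtain ⟨n, hn⟩ := hfin
  rcases n with _ | n
  · omega
  · have : R.length ≤ (n + 1) * R.length := Nat.le_mul_of_pos_left _ (by omega)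
    omega

open FreeGroup in
/-- A cyclically reduced word that is not a proper power can be stacked.  The inverses `q i` of its
prefixes represent pairwise distinct cosets of `⟨L⟩`, and positions are ordered by a left-invariant
order on these cosets.  Letters act on the left, so the stacked word reads the inverses of the
letters of `L`. -/
theorem exists_stackedWord {α : Type*} (L : List (α × Bool)) (hL : IsCyclicallyReduced L)
    (hne : L ≠ [])
    (hpp : ∀ (u : FreeGroup α) (m : ℤ), mk L = u ^ m → m = 1 ∨ m = -1) :
    ∃ (I : Type) (_ : LinearOrder I) (_ : Finite I) (W : StackedWord α I) (i₀ : I)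
      (q : I → FreeGroup α), q i₀ = 1 ∧ ∀ i, ∃ c ∈ Subgroup.zpowers (mk L),
        q (W.next i) = letterElt (W.letter i) * q i * c := by
  classical
  obtain ⟨m, hm⟩ : ∃ m, L.length = m + 1 :=
    Nat.exists_eq_succ_of_ne_zero (List.length_pos_of_ne_nil hne).ne'
  have hlt : ∀ i : Fin (m + 1), i.val < L.length := fun i => by rw [hm]; exact i.2
  set C := Subgroup.zpowers (mk L) with hC
  let q : Fin (m + 1) → FreeGroup α := fun i => (mk (L.take i.val))⁻¹
  let next : Equiv.Perm (Fin (m + 1)) := Equiv.addRight 1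
  let letter : Fin (m + 1) → α × Bool := fun i => ((L[i.val]'(hlt i)).1, !(L[i.val]'(hlt i)).2)
  have hnext : ∀ i : Fin (m + 1), next i = i + 1 := fun i => rfl
  have hq0 : q 0 = 1 := by simp [q, one_eq_mk]
  have hstep : ∀ i, ∃ c ∈ C, q (next i) = letterElt (letter i) * q i * c := by
    intro i
    have htake : mk (L.take (i.val + 1)) = mk (L.take i.val) * mk [L[i.val]'(hlt i)] := by
      rw [mul_mk, List.take_succ_eq_append_getElem (hlt i)]
    have hl : letterElt (letter i) = (mk [L[i.val]'(hlt i)])⁻¹ := letterElt_eq_inv _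
    rw [hl]
    by_cases hi : i = Fin.last m
    · refine ⟨mk L, Subgroup.mem_zpowers _, ?_⟩
      have h1 : next i = 0 := by rw [hnext, hi]; simp
      have h2 : L.take (i.val + 1) = L := by
        rw [List.take_of_length_le]; rw [hi, hm]; simp
      rw [h2] at htake
      rw [h1, hq0, htake]
      simp only [q]
      group
    · refine ⟨1, one_mem _, ?_⟩
      have h1 : (next i).val = i.val + 1 := by
        rw [hnext, Fin.val_add_one, if_neg hi]
      simp only [q, h1]
      rw [htake]
      group
  have hdist : ∀ i j, i ≠ j → (q i)⁻¹ * q j ∉ C := by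
    have key : ∀ i j : Fin (m + 1), j.val < i.val → (q i)⁻¹ * q j ∉ C := by
      intro i j hij
      have e1 : L.take i.val = L.take j.val ++ (L.take i.val).drop j.val := by
        conv_lhs => rw [← List.take_append_drop j.val (L.take i.val)]
        rw [List.take_take, min_eq_left hij.le]
      have e2 : L = L.take j.val ++ (L.take i.val).drop j.val ++ L.drop i.val := by
        rw [← e1, List.take_append_drop]
      have hi := hlt i
      have := prefix_conj_notMem (L.take j.val) ((L.take i.val).drop j.val) (L.drop i.val)
        (by
          apply List.ne_nil_of_length_pos
          simp; omega)
        (by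
          apply List.ne_nil_of_length_pos
          simp; omega) (by rw [← e2]; exact hL)
      rw [← e2, ← e1] at this
      simpa [q] using this
    intro i j hij
    rcases lt_or_gt_of_ne (fun h => hij (Fin.ext h) : i.val ≠ j.val) with h | h
    · intro hmem
      apply key j i h
      have := C.inv_mem hmem
      simpa using this
    · exact key i j h
  obtain ⟨P, hmul, hCP, hdisj, htot⟩ := exists_cone (mk L) hpp
    ((Finset.univ : Finset (Fin (m + 1) × Fin (m + 1))).image fun p => (q p.1)⁻¹ * q p.2)
  let r : Fin (m + 1) → Fin (m + 1) → Prop := fun i j => (q i)⁻¹ * q j ∈ P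
  have hrirr : ∀ i, ¬ r i i := fun i h => hdisj _ h (by simp)
  have hrtrans : ∀ i j k, r i j → r j k → r i k := by
    intro i j k hij hjk
    have := hmul _ hij _ hjk
    simpa [r, mul_assoc] using this
  have hrtot : ∀ i j, i ≠ j → r i j ∨ r j i := by
    intro i j hij
    rcases htot _ (Finset.mem_image_of_mem _ (Finset.mem_univ (i, j))) with h | h | h
    · exact absurd h (hdist i j hij)
    · exact Or.inl h
    · right; simpa [r] using h
  have : IsStrictTotalOrder (Fin (m + 1)) r :=
    { trichotomous := fun a b h1 h2 => by
        by_contra hne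
        rcases hrtot a b hne with h | h
        exacts [h1 h, h2 h]
      irrefl := hrirr
      trans := hrtrans }
  let inst : LinearOrder (Fin (m + 1)) := linearOrderOfSTO r
  have hinst : ∀ i j, inst.lt i j ↔ r i j := fun i j => Iff.rfl
  have hends : ∀ i, ∃ c ∈ C, q (if (letter i).2 then next i else i) =
      FreeGroup.of (letter i).1 * q (if (letter i).2 then i else next i) * c := by
    intro i
    obtain ⟨c, hc, h⟩ := hstep i
    by_cases hb : (letter i).2 = true
    · refine ⟨c, hc, ?_⟩
      simpa [hb, letterElt] using h
    · refine ⟨c⁻¹, C.inv_mem hc, ?_⟩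
      simp only [hb, letterElt] at h ⊢
      simp [h, mul_assoc]
  refine ⟨Fin (m + 1), inst, inferInstance, @StackedWord.mk α _ inst next letter ?_ ?_ ?_, 0, q,
    hq0, hstep⟩
  · intro i j
    have hpow : ∀ n : ℕ, ∀ h : n < m + 1, (next ^ n) 0 = ⟨n, h⟩ := by
      intro n
      induction n with
      | zero => intro h; rfl
      | succ n ih =>
        intro h
        rw [pow_succ', Equiv.Perm.mul_apply, ih (by omega), hnext]
        apply Fin.ext
        rw [Fin.val_add_one, if_neg]
        intro h'
        have := congrArg Fin.val h'
        simp at this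
        omega
    have hz : ∀ k : Fin (m + 1), next.SameCycle 0 k := fun k =>
      ⟨(k.val : ℤ), by rw [zpow_natCast, hpow k.val k.2]⟩
    exact (hz i).symm.trans (hz j)
  · intro i h
    have hkey : (L[(next i).val]'(hlt _)).2 = (L[i.val]'(hlt i)).2 := by
      by_cases hi : i = Fin.last m
      · have h1 : next i = 0 := by rw [hnext, hi]; simp
        have h3 : L[i.val]'(hlt i) ∈ L.getLast? := by
          rw [List.getLast?_eq_getElem?]; simp [hm, hi]
        have h4 : L[(next i).val]'(hlt _) ∈ L.head? := by
          rw [List.head?_eq_getElem?]; simp [h1, hm]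
        exact (hL.2 _ h3 _ h4 h.symm).symm
      · have h1 : (next i).val = i.val + 1 := by
          rw [hnext, Fin.val_add_one, if_neg hi]
        have h2 : i.val + 1 < L.length := h1 ▸ hlt (next i)
        have h3 := List.isChain_iff_getElem.1 hL.isReduced i.val h2
        simp only [letter, h1] at h ⊢
        exact (h3 h.symm).symm
    simp only [letter, hkey]
  -- The two ends of an edge differ by left translation by a generator, up to `C`.
  · intro i j hij
    obtain ⟨c, hc, hi⟩ := hends i
    obtain ⟨d, hd, hj⟩ := hends j
    rw [hinst, hinst]
    simp only [r]
    rw [hi, hj, ← hij]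
    generalize q (if (letter i).2 then i else next i) = x
    generalize q (if (letter j).2 then j else next j) = y
    have e : (FreeGroup.of (letter i).1 * x * c)⁻¹ * (FreeGroup.of (letter i).1 * y * d) =
        c⁻¹ * (x⁻¹ * y) * d := by group
    rw [e]
    constructor
    · intro h
      exact (hCP _ (hCP _ h _ (C.inv_mem hc)).1 _ hd).2
    · intro h
      have := (hCP _ (hCP _ h _ hc).1 _ (C.inv_mem hd)).2
      simpa [mul_assoc] using this

/-! ### Double cosets and circles -/

/-- **Wise's W-cycles conjecture, group-theoretic form.**
Let `F` be a free group, `w ∈ F` nontrivial and not a proper power, and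
`C = ⟨w⟩` the cyclic subgroup it generates.  If `H ≤ F` is generated by `n`
elements and `g₁, …, g_k` lie in pairwise distinct double cosets `H gᵢ C`
with `H ∩ gᵢ C gᵢ⁻¹` nontrivial for each `i`, then `k ≤ n`. -/
theorem wise_W_cycles_double_cosets {α : Type*} (n k : ℕ)
    (w : FreeGroup α) (hw : w ≠ 1)
    (hpp : ∀ (u : FreeGroup α) (m : ℤ), w = u ^ m → m = 1 ∨ m = -1)
    (H : Subgroup (FreeGroup α)) (S : Finset (FreeGroup α))
    (hcard : S.card = n) (hgen : Subgroup.closure (S : Set (FreeGroup α)) = H)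
    (g : Fin k → FreeGroup α)
    (hdistinct : ∀ i j : Fin k, i ≠ j →
      ¬ ∃ h ∈ H, ∃ c ∈ Subgroup.zpowers w, g j = h * g i * c)
    (hnontrivial : ∀ i : Fin k, ∃ x : FreeGroup α, x ≠ 1 ∧ x ∈ H ∧
      ∃ c ∈ Subgroup.zpowers w, x = g i * c * (g i)⁻¹) :
    k ≤ n := by
  classical
  obtain ⟨L, u, hL, hwL⟩ : ∃ (L : List (α × Bool)) (u : FreeGroup α),
      FreeGroup.IsCyclicallyReduced L ∧ w = u * FreeGroup.mk L * u⁻¹ := by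
    refine ⟨FreeGroup.reduceCyclically w.toWord,
      FreeGroup.mk (FreeGroup.reduceCyclically.conjugator w.toWord),
      FreeGroup.reduceCyclically.isCyclicallyReduced FreeGroup.isReduced_toWord, ?_⟩
    rw [FreeGroup.inv_mk, FreeGroup.mul_mk, FreeGroup.mul_mk,
      FreeGroup.reduceCyclically.conj_conjugator_reduceCyclically, FreeGroup.mk_toWord]
  have hLw : FreeGroup.mk L = u⁻¹ * w * u := by rw [hwL]; group
  have hne : L ≠ [] := by
    rintro rfl
    apply hw
    rw [hwL, ← FreeGroup.one_eq_mk]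
    group
  have hppL : ∀ (v : FreeGroup α) (m : ℤ), FreeGroup.mk L = v ^ m → m = 1 ∨ m = -1 := by
    intro v m h
    apply hpp (u * v * u⁻¹) m
    rw [hwL, h, conj_zpow]
  obtain ⟨I, _, _, W, i₀, q, hq0, hq⟩ := exists_stackedWord L hL hne hppL
  set C := Subgroup.zpowers (FreeGroup.mk L) with hC
  have hCw : ∀ c ∈ C, u * c * u⁻¹ ∈ Subgroup.zpowers w := by
    rintro _ ⟨t, rfl⟩
    refine ⟨t, ?_⟩
    simp only [hwL, conj_zpow]
  have : Nonempty I := ⟨i₀⟩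
  let X := FreeGroup α ⧸ H
  -- The double coset `H (g j) ⟨w⟩` corresponds to the `C`-orbit of `base j`.
  let base : Fin k → X := fun j => ((u⁻¹ * (g j)⁻¹ : FreeGroup α) : X)
  let z : Fin k → X × I := fun j => (base j, i₀)
  -- The circle through `(x, i₀)` meets the position `i` only in points of `q i • C • x`.
  have hinv : ∀ x : X, ∀ p : X × I, (W.advance X).SameCycle (x, i₀) p →
      ∃ c ∈ C, p.1 = q p.2 • c • x := by
    intro x
    let Q : X × I → Prop := fun p => ∃ c ∈ C, p.1 = q p.2 • c • x
    have hQ : ∀ p, Q p ↔ Q (W.advance X p) := by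
      rintro ⟨y, i⟩
      obtain ⟨d, hd, hqi⟩ := hq i
      simp only [Q, StackedWord.advance_apply]
      constructor
      · rintro ⟨c, hc, rfl⟩
        refine ⟨d⁻¹ * c, C.mul_mem (C.inv_mem hd) hc, ?_⟩
        rw [hqi]
        simp only [smul_smul]
        congr 1
        group
      · rintro ⟨c, hc, h⟩
        refine ⟨d * c, C.mul_mem hd hc, ?_⟩
        rw [← inv_smul_smul (letterElt (W.letter i)) y, h, hqi]
        simp only [smul_smul]
        congr 1
        group
    rintro p ⟨t, rfl⟩
    have h0 : Q (x, i₀) := ⟨1, C.one_mem, by simp [hq0]⟩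
    have hzp : ∀ t : ℤ, Q (((W.advance X) ^ t) (x, i₀)) := by
      intro t
      induction t using Int.induction_on with
      | zero => simpa using h0
      | succ t ih =>
        rw [add_comm, zpow_add, Equiv.Perm.mul_apply, zpow_one]
        exact (hQ _).1 ih
      | pred t ih =>
        rw [hQ, ← Equiv.Perm.mul_apply, ← zpow_one_add]
        simpa using ih
    exact hzp t
  -- A nontrivial intersection gives a nonzero power of `mk L` fixing `base j`, so its `C`-orbit is
  -- finite.
  have hfinC : ∀ j, Set.Finite {y : X | ∃ c ∈ C, y = c • base j} := by
    intro j
    obtain ⟨x, hx1, hxH, c, ⟨t, rfl⟩, rfl⟩ := hnontrivial j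
    have ht : t ≠ 0 := by
      rintro rfl
      apply hx1
      simp
    have hfix : (FreeGroup.mk L ^ t) • base j = base j := by
      rw [MulAction.Quotient.smul_mk, QuotientGroup.eq]
      rw [hLw]
      have : (u⁻¹ * w * u) ^ t = u⁻¹ * w ^ t * u := by
        have := conj_zpow (i := t) (a := u⁻¹) (b := w)
        rwa [inv_inv] at this
      rw [this]
      have := H.inv_mem hxH
      simpa [mul_assoc] using this
    refine ((Set.finite_Ico (0 : ℤ) |t|).image
      (fun s => (FreeGroup.mk L ^ s) • base j)).subset ?_
    rintro _ ⟨_, ⟨s, rfl⟩, rfl⟩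
    refine ⟨s % t, ⟨Int.emod_nonneg _ ht, Int.emod_lt_abs _ ht⟩, ?_⟩
    have hfix' : ((FreeGroup.mk L ^ t) ^ (s / t)) • base j = base j := by
      have : FreeGroup.mk L ^ t ∈ MulAction.stabilizer (FreeGroup α) (base j) := hfix
      exact Subgroup.zpow_mem _ this (s / t)
    conv_rhs => rw [← Int.emod_add_mul_ediv s t]
    simp only [zpow_add, zpow_mul, mul_smul, hfix']
  have hfinite : ∀ j, Set.Finite {p | (W.advance X).SameCycle (z j) p} := by
    intro j
    refine (((hfinC j).prod (Set.finite_univ (α := I))).image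
      (fun p : X × I => (q p.2 • p.1, p.2))).subset ?_
    rintro ⟨y, i⟩ hp
    obtain ⟨c, hc, h⟩ := hinv _ _ hp
    exact ⟨(c • base j, i), ⟨⟨c, hc, rfl⟩, trivial⟩, by simp [← h]⟩
  let O : Fin k → Finset (X × I) := fun j => (hfinite j).toFinset
  have hO : ∀ j p, p ∈ O j ↔ (W.advance X).SameCycle (z j) p := by
    intro j p
    simp [O]
  have hdisj : ∀ i j, i ≠ j → Disjoint (O i) (O j) := by
    intro i j hij
    rw [Finset.disjoint_left]
    intro p hi hj
    obtain ⟨c, hc, h1⟩ := hinv _ _ ((hO i p).1 hi)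
    obtain ⟨d, hd, h2⟩ := hinv _ _ ((hO j p).1 hj)
    have h3 : c • base i = d • base j := MulAction.injective (q p.2) (h1.symm.trans h2)
    rw [MulAction.Quotient.smul_mk, MulAction.Quotient.smul_mk, QuotientGroup.eq] at h3
    apply hdistinct i j hij
    refine ⟨_, H.inv_mem h3, u * (c⁻¹ * d) * u⁻¹,
      hCw _ (C.mul_mem (C.inv_mem hc) hd), ?_⟩
    simp only [smul_eq_mul]
    group
  have := (W.card_le_finrank z O hO hdisj Finset.univ).trans
    (finrank_cyclesOn_le H S hgen _)
  simpa [hcard] using this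
end

section
/- Let F be the free group on a set S, and let w ∈ F be represented by a reduced word (s₁^{ε₁}, …, s_m^{εₘ}) of length m ≥ 1 (each s_i ∈ S, ε_i = ±1) that is cyclically reduced (the last letter is not the inverse of the first). Assume w is not a proper power in F. For 0 ≤ j < m let a_j = s₁^{ε₁} ⋯ s_j^{ε_j} ∈ F be the j-th prefix (a₀ = 1), and let L = F/⟨⟨w⟩⟩ be the one-relator group with relator w. Then there exists a total preorder ⪯ on L that is invariant under right multiplication (a ⪯ b implies ag ⪯ bg for all g ∈ L) and that distinguishes the images ā₀, …, ā_{m−1} of the prefixes in L: for all 0 ≤ i < j < m, it is not the case that both ā_i ⪯ ā_j and ā_j ⪯ ā_i. -/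
/-!
A right-invariant total preorder on a group `G` amounts to a submonoid `P` with `P ∪ P⁻¹ = G`: put
`a` below `b` when `b * a⁻¹ ∈ P`; the elements equivalent to `1` form `P ∩ P⁻¹`. A criterion of
Burns-Hale type (`exists_submonoid`) produces `P` with `R ⊆ P ∩ P⁻¹` and `T` disjoint from
`P ∩ P⁻¹`, as soon as for all finite `R₀ ⊆ R` and finite `D` meeting `T` some subgroup containing
`D ∪ R₀` has a `ℚ`-valued character which kills `R₀` but not all of `D` (`HasCharacter`): order
lexicographically by characters, and pass to a limit along an ultrafilter.

Let `F` be the free group, `w` the relator, `a j` its prefixes and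
`T = {a q * (a p)⁻¹ | p < q < m}`. The criterion is applied twice in `F`, both times with this `T`.

*First application*, `R = {w}`. An element of `T` is not a power of `w`, by comparing lengths. As
`w` is not a proper power, `⟨D, w⟩` is not cyclic; being free, it has rank at least two, hence a
nonzero character killing `w` (`hasCharacter_free`). The outcome (`exists_stacking`) is a total
order on the positions of the cyclic word `w`, compatible with moving two positions along the same
letter: a stacking in the sense of Louder and Wilton.

*Second application*, `R` the set of conjugates of `w`. Let `K` be generated by `D` and finitely
many conjugates `c * w * c⁻¹`. These are `w`-loops in the Schreier graph on `F ⧸ K`, based at a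
finite set `C` of vertices, and characters of `K` killing them are classes of `ℚ`-valued
`1`-cochains which sum to zero around each loop. A loop other than the one at the base vertex
having an edge crossed only once, by all the loops together, can be discarded, as the value of the
cochain there is free to be adjusted. When there is no such loop left, the stacking puts the
strands of the loops over each vertex and each edge in a linear order, and looking at the highest
strands gives `|C| + |V| ≤ |E|` for the numbers of loops, vertices and edges
(`Stacking.card_le`). This uses that the loop at the base vertex revisits a vertex, because `D`
meets `T`. Coboundaries have dimension at most `|V| - 1`, so some cochain vanishing on the loops is
not a coboundary (`Stacking.exists_cocycle`), and it yields a nonzero character of `K`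
(`Stacking.hasCharacter`).

The resulting submonoid contains the normal closure of `w`, so it descends to the quotient.
-/

namespace PrefixOrder

open Filter

/-! ### Preorders from characters -/

section Characters

variable {G : Type*} [Group G]

/-- A `ℚ`-valued character `ψ` exists on some subgroup `K ⊇ D ∪ R`, killing `R` but not all of `D`.
Here `ψ` is a total function on `G` whose values outside `K` are irrelevant. -/
def HasCharacter (R D : Set G) : Prop :=
  ∃ (K : Subgroup G) (ψ : G → ℚ), D ⊆ K ∧ R ⊆ K ∧
    (∀ a ∈ K, ∀ b ∈ K, ψ (a * b) = ψ a + ψ b) ∧ (∀ r ∈ R, ψ r = 0) ∧ ∃ g ∈ D, ψ g ≠ 0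

theorem character_one {K : Subgroup G} {ψ : G → ℚ}
    (hψ : ∀ a ∈ K, ∀ b ∈ K, ψ (a * b) = ψ a + ψ b) : ψ 1 = 0 := by
  have h := hψ 1 K.one_mem 1 K.one_mem
  rw [mul_one] at h
  linarith

theorem character_inv {K : Subgroup G} {ψ : G → ℚ}
    (hψ : ∀ a ∈ K, ∀ b ∈ K, ψ (a * b) = ψ a + ψ b) {g : G} (hg : g ∈ K) : ψ g⁻¹ = -ψ g := by
  have h := hψ g hg g⁻¹ (K.inv_mem hg)
  rw [mul_inv_cancel, character_one hψ] at h
  linarith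

/-- A character of `⟨D ∪ R⟩` that kills `R` and is nonzero cannot kill `D`. -/
theorem hasCharacter_of_closure {R D : Set G} (ψ : G → ℚ)
    (hψ : ∀ a ∈ Subgroup.closure (D ∪ R), ∀ b ∈ Subgroup.closure (D ∪ R),
      ψ (a * b) = ψ a + ψ b)
    (hR : ∀ r ∈ R, ψ r = 0) (hne : ∃ g ∈ Subgroup.closure (D ∪ R), ψ g ≠ 0) :
    HasCharacter R D := by
  refine ⟨Subgroup.closure (D ∪ R), ψ, ?_, ?_, hψ, hR, ?_⟩
  · exact Set.subset_union_left.trans Subgroup.subset_closure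
  · exact Set.subset_union_right.trans Subgroup.subset_closure
  · by_contra! hD
    obtain ⟨g, hg, hgne⟩ := hne
    apply hgne
    clear hgne
    induction hg using Subgroup.closure_induction with
    | mem x hx => exact hx.elim (hD x) (hR x)
    | one => exact character_one hψ
    | mul x y hx hy ihx ihy =>
      rw [hψ x hx y hy, ihx, ihy, add_zero]
    | inv x hx ihx =>
      rw [character_inv hψ hx, ihx, neg_zero]

/-- Finite step of the ordering criterion, by induction on `D`: compare first by the sign of a
character which does not kill `D`, then order the strictly smaller set of those elements of `D`
that it kills. -/
theorem exists_submonoid_finite {R T : Set G}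
    (H : ∀ D : Finset G, (∃ d ∈ D, d ∈ T) → HasCharacter R D) (D : Finset G) :
    ∃ P : Submonoid G, (∀ r ∈ R, r ∈ P ∧ r⁻¹ ∈ P) ∧ (∀ g ∈ D, g ∈ P ∨ g⁻¹ ∈ P) ∧
      ∀ d ∈ D, d ∈ T → ¬(d ∈ P ∧ d⁻¹ ∈ P) := by
  classical
  induction D using Finset.strongInduction with
  | H D ih =>
    by_cases hD : ∃ d ∈ D, d ∈ T
    · obtain ⟨K, ψ, hDK, hRK, hψ, hψR, g, hgD, hg⟩ := H D hD
      obtain ⟨P, hPR, hPt, hPT⟩ := ih (D.filter fun x => ψ x = 0)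
        (Finset.filter_ssubset.2 ⟨g, hgD, hg⟩)
      let Q : Submonoid G :=
        { carrier := {x | x ∈ K ∧ (0 < ψ x ∨ (ψ x = 0 ∧ x ∈ P))}
          one_mem' := ⟨K.one_mem, Or.inr ⟨character_one hψ, P.one_mem⟩⟩
          mul_mem' := by
            rintro a b ⟨ha, ha'⟩ ⟨hb, hb'⟩
            refine ⟨K.mul_mem ha hb, ?_⟩
            rw [hψ a ha b hb]
            rcases ha' with ha' | ⟨ha', haP⟩ <;> rcases hb' with hb' | ⟨hb', hbP⟩
            · exact Or.inl (by linarith)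
            · exact Or.inl (by linarith)
            · exact Or.inl (by linarith)
            · exact Or.inr ⟨by linarith, P.mul_mem haP hbP⟩ }
      have hQ : ∀ x, x ∈ Q ↔ x ∈ K ∧ (0 < ψ x ∨ (ψ x = 0 ∧ x ∈ P)) := fun _ => Iff.rfl
      refine ⟨Q, ?_, ?_, ?_⟩
      · intro r hr
        have hrK := hRK hr
        rw [hQ, hQ, character_inv hψ hrK, hψR r hr]
        exact ⟨⟨hrK, Or.inr ⟨rfl, (hPR r hr).1⟩⟩,
          ⟨K.inv_mem hrK, Or.inr ⟨neg_zero, (hPR r hr).2⟩⟩⟩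
      · intro x hx
        have hxK : x ∈ K := hDK hx
        rw [hQ, hQ, character_inv hψ hxK]
        rcases lt_trichotomy (ψ x) 0 with h | h | h
        · exact Or.inr ⟨K.inv_mem hxK, Or.inl (by linarith)⟩
        · rcases hPt x (Finset.mem_filter.2 ⟨hx, h⟩) with hP | hP
          · exact Or.inl ⟨hxK, Or.inr ⟨h, hP⟩⟩
          · exact Or.inr ⟨K.inv_mem hxK, Or.inr ⟨by linarith, hP⟩⟩
        · exact Or.inl ⟨hxK, Or.inl h⟩
      · rintro x hx hxT ⟨h1, h2⟩
        have hxK : x ∈ K := hDK hx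
        rw [hQ] at h1 h2
        rw [character_inv hψ hxK] at h2
        rcases h1.2 with h1 | ⟨h1, h1P⟩ <;> rcases h2.2 with h2 | ⟨h2, h2P⟩
        · linarith
        · linarith
        · linarith
        · exact hPT x (Finset.mem_filter.2 ⟨hx, h1⟩) hxT ⟨h1P, h2P⟩
    · exact ⟨⊤, by simp, by simp, fun d hd hdT => (hD ⟨d, hd, hdT⟩).elim⟩

/-- Ordering criterion of Burns-Hale type. A submonoid `P` with `P ∪ P⁻¹ = G` is the same as a total
right-invariant preorder, where `a` is below `b` when `b * a⁻¹ ∈ P`; the conclusion says that in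
this preorder `R` is equivalent to `1` and no element of `T` is. The finite solutions are glued
along an ultrafilter on pairs of finite sets. -/
theorem exists_submonoid {R T : Set G}
    (H : ∀ D R₀ : Finset G, (R₀ : Set G) ⊆ R → (∃ d ∈ D, d ∈ T) → HasCharacter (R₀ : Set G) D) :
    ∃ P : Submonoid G, (∀ r ∈ R, r ∈ P ∧ r⁻¹ ∈ P) ∧ (∀ g, g ∈ P ∨ g⁻¹ ∈ P) ∧
      ∀ d ∈ T, ¬(d ∈ P ∧ d⁻¹ ∈ P) := by
  classical
  have h : ∀ i : Finset G × Finset G, ∃ P : Submonoid G,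
      (∀ r ∈ i.2.filter (· ∈ R), r ∈ P ∧ r⁻¹ ∈ P) ∧ (∀ g ∈ i.1, g ∈ P ∨ g⁻¹ ∈ P) ∧
      ∀ d ∈ i.1, d ∈ T → ¬(d ∈ P ∧ d⁻¹ ∈ P) := fun i =>
    exists_submonoid_finite (R := ((i.2.filter (· ∈ R) : Finset G) : Set G))
      (fun D hD => H D _ (by intro x hx; simpa using (Finset.mem_filter.1 hx).2) hD) i.1
  choose P hPR hPt hPT using h
  let u : Ultrafilter (Finset G × Finset G) := Ultrafilter.of atTop
  have hu : ∀ g : G, ∀ᶠ i : Finset G × Finset G in u, g ∈ i.1 ∧ g ∈ i.2 := by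
    intro g
    apply Ultrafilter.of_le
    filter_upwards [eventually_ge_atTop (({g}, {g}) : Finset G × Finset G)] with i hi
    exact ⟨by simpa using hi.1, by simpa using hi.2⟩
  let Q : Submonoid G :=
    { carrier := {g | ∀ᶠ i in u, g ∈ P i}
      one_mem' := Eventually.of_forall fun i => (P i).one_mem
      mul_mem' := fun {a b} ha hb => by
        filter_upwards [ha, hb] with i h1 h2 using (P i).mul_mem h1 h2 }
  have hQ : ∀ g, g ∈ Q ↔ ∀ᶠ i in u, g ∈ P i := fun _ => Iff.rfl
  refine ⟨Q, ?_, ?_, ?_⟩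
  · intro r hr
    rw [hQ, hQ, ← eventually_and]
    filter_upwards [hu r] with i hi
    exact hPR i r (Finset.mem_filter.2 ⟨hi.2, hr⟩)
  · intro g
    rw [hQ, hQ, ← Ultrafilter.eventually_or]
    filter_upwards [hu g] with i hi using hPt i g hi.1
  · rintro d hd ⟨h1, h2⟩
    rw [hQ] at h1 h2
    obtain ⟨i, h1, h2, h3⟩ := (h1.and (h2.and (hu d))).exists
    exact hPT i d h3.1 hd ⟨h1, h2⟩

end Characters

/-! ### Characters of subgroups of the free group -/

section Free

variable {S : Type*}

/-- If `w` is not a proper power and `d ∉ ⟨w⟩`, the free group `⟨D, w⟩` is not cyclic, so it has rank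
at least two; a combination of two coordinate characters then kills `w` and is nonzero. -/
theorem hasCharacter_free {w : FreeGroup S}
    (hpp : ∀ (u : FreeGroup S) (k : ℤ), w = u ^ k → k = 1 ∨ k = -1)
    {D : Set (FreeGroup S)} {d : FreeGroup S} (hd : d ∈ D) (hdw : d ∉ Subgroup.zpowers w) :
    HasCharacter {w} D := by
  classical
  set K := Subgroup.closure (D ∪ {w}) with hK
  have hwK : w ∈ K := Subgroup.subset_closure (by simp)
  have hdK : d ∈ K := Subgroup.subset_closure (by simp [hd])
  let b := IsFreeGroup.basis K
  have key : ∃ φ : K →* Multiplicative ℚ, φ ⟨w, hwK⟩ = 1 ∧ φ ≠ 1 := by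
    by_cases hs : Subsingleton (IsFreeGroup.Generators K)
    · exfalso
      obtain ⟨z, hz⟩ : ∃ z : K, ∀ g : K, g ∈ Subgroup.zpowers z := by
        have hcl : Subgroup.closure (Set.range b) = ⊤ := by
          have h2 := FreeGroup.closure_range_of (IsFreeGroup.Generators K)
          have h1 := congrArg (Subgroup.map b.repr.symm.toMonoidHom) h2
          rw [MonoidHom.map_closure, ← Set.range_comp,
            Subgroup.map_top_of_surjective _ b.repr.symm.surjective] at h1
          exact h1
        rcases isEmpty_or_nonempty (IsFreeGroup.Generators K) with he | ⟨⟨x⟩⟩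
        · refine ⟨1, fun g => ?_⟩
          have : g ∈ (⊤ : Subgroup K) := trivial
          rw [← hcl, Set.range_eq_empty, Subgroup.closure_empty] at this
          simpa using this
        · refine ⟨b x, fun g => ?_⟩
          have : g ∈ (⊤ : Subgroup K) := trivial
          have hr : Set.range b = {b x} := by
            ext y
            constructor
            · rintro ⟨x', rfl⟩
              rw [Subsingleton.elim x' x]; rfl
            · rintro rfl
              exact ⟨x, rfl⟩
          rwa [← hcl, hr, ← Subgroup.zpowers_eq_closure] at this
      obtain ⟨k, hk⟩ := hz ⟨w, hwK⟩
      obtain ⟨l, hl⟩ := hz ⟨d, hdK⟩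
      have hk' : w = (z : FreeGroup S) ^ k := by
        have := congrArg Subtype.val hk
        simpa using this.symm
      have hl' : d = (z : FreeGroup S) ^ l := by
        have := congrArg Subtype.val hl
        simpa using this.symm
      apply hdw
      rcases hpp _ _ hk' with h | h
      · exact ⟨l, by simp [hk', hl', h]⟩
      · exact ⟨-l, by simp [hk', hl', h]⟩
    · rw [not_subsingleton_iff_nontrivial] at hs
      obtain ⟨x, y, hxy⟩ := hs
      -- `χ x` counts occurrences of the basis element `x`; cross-multiplying two of these kills `w`
      let χ : IsFreeGroup.Generators K → (K →* Multiplicative ℚ) := fun x =>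
        b.lift (fun z => if z = x then Multiplicative.ofAdd 1 else 1)
      have hχ : ∀ x z, χ x (b z) = if z = x then Multiplicative.ofAdd (1 : ℚ) else 1 := by
        intro x z
        simp [χ]
      let p : ℚ := (χ x ⟨w, hwK⟩).toAdd
      let q : ℚ := (χ y ⟨w, hwK⟩).toAdd
      by_cases hp : p = 0
      · refine ⟨χ x, ?_, ?_⟩
        · exact congrArg Multiplicative.ofAdd hp
        · intro h
          have := hχ x x
          rw [h] at this
          simp at this
          exact absurd (congrArg Multiplicative.toAdd this) (by simp)
      · let φ : K →* Multiplicative ℚ :=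
          { toFun := fun g => Multiplicative.ofAdd (q * (χ x g).toAdd - p * (χ y g).toAdd)
            map_one' := by simp
            map_mul' := by
              intro g h
              rw [← ofAdd_add, (χ x).map_mul, (χ y).map_mul, toAdd_mul, toAdd_mul]
              congr 1
              ring }
        refine ⟨φ, ?_, ?_⟩
        · change Multiplicative.ofAdd (q * p - p * q) = 1
          rw [mul_comm, sub_self, ofAdd_zero]
        · intro h
          have h2 : φ (b y) = 1 := by rw [h]; rfl
          have h3 : q * (χ x (b y)).toAdd - p * (χ y (b y)).toAdd = 0 :=
            congrArg Multiplicative.toAdd h2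
          rw [hχ, hχ, if_neg hxy.symm, if_pos rfl] at h3
          simp at h3
          exact hp h3
  obtain ⟨φ, hφw, hφ⟩ := key
  refine hasCharacter_of_closure (fun g => if h : g ∈ K then (φ ⟨g, h⟩).toAdd else 0) ?_ ?_ ?_
  · intro a ha b hb
    rw [← hK] at ha hb
    simp only [dif_pos ha, dif_pos hb, dif_pos (K.mul_mem ha hb)]
    rw [← toAdd_mul, ← map_mul]
    rfl
  · rintro r rfl
    simp only [dif_pos hwK, hφw, toAdd_one]
  · by_contra! h
    apply hφ
    ext g
    have := h g g.2
    simp only [dif_pos g.2] at this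
    exact this

end Free

/-! ### Loops glued along a graph and the count of edges -/

section Counting

variable {S X : Type*} [MulAction (FreeGroup S) X]

/-- The preorder attached to a submonoid `P`: `g` is below `h` when `h * g⁻¹ ∈ P`. It is invariant
under right multiplication. -/
def RelLE (P : Submonoid (FreeGroup S)) (g h : FreeGroup S) : Prop := h * g⁻¹ ∈ P

theorem RelLE.refl (P : Submonoid (FreeGroup S)) (g : FreeGroup S) : RelLE P g g := by
  simp [RelLE, P.one_mem]

theorem RelLE.trans {P : Submonoid (FreeGroup S)} {g h k : FreeGroup S}
    (h1 : RelLE P g h) (h2 : RelLE P h k) : RelLE P g k := by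
  have := P.mul_mem h2 h1
  simpa [RelLE, mul_assoc] using this

theorem relLE_mul_right {P : Submonoid (FreeGroup S)} {g h : FreeGroup S} (k : FreeGroup S) :
    RelLE P (g * k) (h * k) ↔ RelLE P g h := by
  simp [RelLE, mul_assoc]

/-- `P` is a total right-invariant preorder on the free group `F` in which the relator `w = a m` is
equivalent to `1` and the prefixes `a 0, …, a (m - 1)` of the cyclically reduced word
`l 0, …, l (m - 1)` are pairwise inequivalent. Positions of `w` are thus linearly ordered in a way
compatible with moving both of two positions along the same letter. The field `red` is cyclic
reducedness: it covers both consecutive positions and the passage from the last letter to the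
first. -/
structure Stacking (m : ℕ) (a : ℕ → FreeGroup S) (l : ℕ → S × Bool)
    (P : Submonoid (FreeGroup S)) : Prop where
  pos : 0 < m
  zero : a 0 = 1
  step : ∀ i < m, a (i + 1) = a i * FreeGroup.mk [l i]
  red : ∀ i < m, ∀ j < m, (i = j + 1 ∨ (i = 0 ∧ j + 1 = m)) → (l i).1 = (l j).1 →
    (l i).2 = (l j).2
  total : ∀ g, g ∈ P ∨ g⁻¹ ∈ P
  mem : a m ∈ P
  inv_mem : (a m)⁻¹ ∈ P
  separates : ∀ i j, i < j → j < m → ¬(RelLE P (a i) (a j) ∧ RelLE P (a j) (a i))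

/-- The prefix at the initial endpoint of the `i`-th edge of `w`, edges being oriented along positive
generators: position `i` if the letter is a generator, position `i + 1` if it is an inverse. -/
def tail (a : ℕ → FreeGroup S) (l : ℕ → S × Bool) (i : ℕ) : FreeGroup S :=
  if (l i).2 then a i else a (i + 1)

/-- The `i`-th edge of the `w`-loop based at `x`, in the graph with vertex set `X` which has, for each
`v` and each generator `s`, an edge `(v, s)` from `v` to `s⁻¹ • v`. The loop is at vertex
`(a i)⁻¹ • x` at position `i`. -/
def edge (a : ℕ → FreeGroup S) (l : ℕ → S × Bool) (x : X) (i : ℕ) : X × S :=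
  ((tail a l i)⁻¹ • x, (l i).1)

/-- The exponent of the `i`-th letter: the direction in which the loop crosses its `i`-th edge. -/
def sgn (l : ℕ → S × Bool) (i : ℕ) : ℚ := if (l i).2 then 1 else -1

theorem sgn_mul_self (l : ℕ → S × Bool) (i : ℕ) : sgn l i * sgn l i = 1 := by
  unfold sgn
  split_ifs <;> norm_num

/-- On the edges in `E`, the cochain `f` is the difference of a vertex function between the terminal
and the initial endpoint. -/
def IsCoboundaryOn (E : Set (X × S)) (f : X × S → ℚ) : Prop :=
  ∃ h : X → ℚ, ∀ e ∈ E, f e = h ((FreeGroup.of e.2)⁻¹ • e.1) - h e.1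

/-- Dimension count: the kernel of `σ` has dimension at least `|α| - |γ|`, whereas the range of `δ`
has dimension at most `|β| - 1`, because `δ` kills the constants. -/
theorem exists_ker_not_mem_range {α β γ : Type*} [Fintype α] [Fintype β] [Fintype γ] [Nonempty β]
    (σ : (α → ℚ) →ₗ[ℚ] (γ → ℚ)) (δ : (β → ℚ) →ₗ[ℚ] (α → ℚ)) (hδ : δ (fun _ => 1) = 0)
    (hc : Fintype.card γ + Fintype.card β ≤ Fintype.card α) :
    ∃ f, σ f = 0 ∧ f ∉ LinearMap.range δ := by
  by_contra! h
  have h1 : LinearMap.ker σ ≤ LinearMap.range δ := fun f hf => h f hf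
  have h2 := Submodule.finrank_mono h1
  have h3 := σ.finrank_range_add_finrank_ker
  have h4 := δ.finrank_range_add_finrank_ker
  have h5 : Module.finrank ℚ (LinearMap.range σ) ≤ Fintype.card γ := by
    have := (LinearMap.range σ).finrank_le
    rwa [Module.finrank_fintype_fun_eq_card] at this
  have h6 : 0 < Module.finrank ℚ (LinearMap.ker δ) := by
    have : Nontrivial (LinearMap.ker δ) := by
      refine ⟨⟨⟨fun _ => 1, hδ⟩, 0, ?_⟩⟩
      intro h
      have h' := congrFun (congrArg Subtype.val h) (Classical.arbitrary β)
      simp at h'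
    exact Module.finrank_pos
  rw [Module.finrank_fintype_fun_eq_card] at h3 h4
  omega

namespace Stacking

variable {m : ℕ} {a : ℕ → FreeGroup S} {l : ℕ → S × Bool} {P : Submonoid (FreeGroup S)}

/-- The prefixes at the two endpoints of the `i`-th edge are `a i` and `a (i + 1)`, in the order given
by the sign of the letter. -/
theorem tail_cases (hs : Stacking m a l P) {i : ℕ} (hi : i < m) :
    ((l i).2 = true ∧ tail a l i = a i ∧ tail a l i * FreeGroup.of (l i).1 = a (i + 1)) ∨
    ((l i).2 = false ∧ tail a l i = a (i + 1) ∧ tail a l i * FreeGroup.of (l i).1 = a i) := by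
  have h := hs.step i hi
  rcases hl : l i with ⟨s, _ | _⟩
  · right
    have h' : FreeGroup.mk [(s, false)] = (FreeGroup.of s)⁻¹ := rfl
    rw [hl, h'] at h
    simp [tail, hl, h]
  · left
    have h' : FreeGroup.mk [(s, true)] = FreeGroup.of s := rfl
    rw [hl, h'] at h
    simp [tail, hl, h]

theorem relLE_total (hs : Stacking m a l P) (g h : FreeGroup S) : RelLE P g h ∨ RelLE P h g := by
  have := hs.total (h * g⁻¹)
  simpa [RelLE] using this

theorem relLE_zero_last (hs : Stacking m a l P) : RelLE P (a 0) (a m) := by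
  simpa [RelLE, hs.zero] using hs.mem

theorem relLE_last_zero (hs : Stacking m a l P) : RelLE P (a m) (a 0) := by
  simpa [RelLE, hs.zero] using hs.inv_mem

theorem eq_of_relLE (hs : Stacking m a l P) {i j : ℕ} (hi : i < m) (hj : j < m)
    (h1 : RelLE P (a i) (a j)) (h2 : RelLE P (a j) (a i)) : i = j := by
  rcases lt_trichotomy i j with h | h | h
  · exact (hs.separates i j h hj ⟨h1, h2⟩).elim
  · exact h
  · exact (hs.separates j i h hi ⟨h2, h1⟩).elim

/-- Two strands over the same edge in opposite directions cannot be at the same height: positions `i`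
and `j + 1` would coincide cyclically, giving a cancelling pair of letters in `w`. -/
theorem false_of_opposite (hs : Stacking m a l P) {i j : ℕ} (hi : i < m) (hj : j < m)
    (hl : (l i).1 = (l j).1) (hli : (l i).2 = true) (hlj : (l j).2 = false)
    (h1 : RelLE P (a i) (a (j + 1))) (h2 : RelLE P (a (j + 1)) (a i)) : False := by
  have h : i = j + 1 ∨ (i = 0 ∧ j + 1 = m) := by
    rcases Nat.lt_or_ge (j + 1) m with h | h
    · exact Or.inl (hs.eq_of_relLE hi h h1 h2)
    · have hm : j + 1 = m := by omega
      rw [hm] at h1 h2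
      exact Or.inr ⟨hs.eq_of_relLE hi hs.pos (h1.trans hs.relLE_last_zero)
        (hs.relLE_zero_last.trans h2), hm⟩
  have := hs.red i hi j hj h hl
  simp [hli, hlj] at this

/-- Distinct positions carrying the same generator are at distinct heights over an edge. -/
theorem eq_of_tail (hs : Stacking m a l P) {i j : ℕ} (hi : i < m) (hj : j < m)
    (hl : (l i).1 = (l j).1) (h1 : RelLE P (tail a l i) (tail a l j))
    (h2 : RelLE P (tail a l j) (tail a l i)) : i = j := by
  rcases hs.tail_cases hi with ⟨hi1, hi2, hi3⟩ | ⟨hi1, hi2, hi3⟩ <;>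
    rcases hs.tail_cases hj with ⟨hj1, hj2, hj3⟩ | ⟨hj1, hj2, hj3⟩
  · rw [hi2, hj2] at h1 h2
    exact hs.eq_of_relLE hi hj h1 h2
  · rw [hi2, hj2] at h1 h2
    exact (hs.false_of_opposite hi hj hl hi1 hj1 h1 h2).elim
  · rw [hi2, hj2] at h1 h2
    exact (hs.false_of_opposite hj hi hl.symm hj1 hi1 h2 h1).elim
  · rw [← relLE_mul_right (FreeGroup.of (l i).1), hi3] at h1 h2
    rw [hl, hj3] at h1 h2
    exact hs.eq_of_relLE hi hj h1 h2

/-- Strands over a common edge are separated by their heights. -/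
theorem edge_injective (hs : Stacking m a l P) {i j : ℕ} (hi : i < m) (hj : j < m) {x y : X}
    (he : edge a l x i = edge a l y j) (h1 : RelLE P (tail a l i) (tail a l j))
    (h2 : RelLE P (tail a l j) (tail a l i)) : x = y ∧ i = j := by
  rw [edge, edge, Prod.mk.injEq] at he
  obtain rfl := hs.eq_of_tail hi hj he.2 h1 h2
  exact ⟨MulAction.injective _ he.1, rfl⟩

variable (m a P) in
/-- Among all strands of the loops based in `C`, the strand of the loop based at `x` at height `g`
is highest over the vertex `g⁻¹ • x`. All positions `j ≤ m` are considered; `0` and `m` are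
equivalent. -/
def IsTop (C : Finset X) (x : X) (g : FreeGroup S) : Prop :=
  ∀ y ∈ C, ∀ j ≤ m, (a j)⁻¹ • y = g⁻¹ • x → RelLE P (a j) g

variable (m a l P) in
/-- Among all strands of the loops based in `C`, the `i`-th edge strand of the loop based at `x` is
highest over its edge. -/
def IsTopEdge (C : Finset X) (x : X) (i : ℕ) : Prop :=
  ∀ y ∈ C, ∀ j < m, edge a l y j = edge a l x i → RelLE P (tail a l j) (tail a l i)

/-- Two strands over the same edge meet at both of its endpoints, in the same order there, by right
invariance; the endpoint considered is at position `k` of the loop based at `x`. -/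
theorem edge_endpoint (hs : Stacking m a l P) {i j k : ℕ} (hi : i < m) (hj : j < m)
    (hk : k = i ∨ k = i + 1) {x y : X} (he : edge a l y j = edge a l x i) :
    ∃ n ≤ m, (a n)⁻¹ • y = (a k)⁻¹ • x ∧
      (RelLE P (a n) (a k) ↔ RelLE P (tail a l j) (tail a l i)) ∧
      (RelLE P (a k) (a n) ↔ RelLE P (tail a l i) (tail a l j)) := by
  rw [edge, edge, Prod.mk.injEq] at he
  obtain ⟨he1, he2⟩ := he
  have hhead : (tail a l j * FreeGroup.of (l i).1)⁻¹ • y =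
      (tail a l i * FreeGroup.of (l i).1)⁻¹ • x := by
    rw [mul_inv_rev, mul_inv_rev, mul_smul, mul_smul, he1]
  have hj' : ∃ p ≤ m, ∃ q ≤ m, tail a l j = a p ∧ tail a l j * FreeGroup.of (l i).1 = a q := by
    rw [← he2]
    rcases hs.tail_cases hj with ⟨-, h2, h3⟩ | ⟨-, h2, h3⟩
    · exact ⟨j, hj.le, j + 1, hj, h2, h3⟩
    · exact ⟨j + 1, hj, j, hj.le, h2, h3⟩
  have hk' : a k = tail a l i ∨ a k = tail a l i * FreeGroup.of (l i).1 := by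
    rcases hs.tail_cases hi with ⟨-, h2, h3⟩ | ⟨-, h2, h3⟩ <;> rcases hk with rfl | rfl
    · exact Or.inl h2.symm
    · exact Or.inr h3.symm
    · exact Or.inr h3.symm
    · exact Or.inl h2.symm
  obtain ⟨p, hp, q, hq, hp', hq'⟩ := hj'
  rcases hk' with hk' | hk'
  · refine ⟨p, hp, ?_, ?_, ?_⟩
    · rw [← hp', hk', he1]
    · rw [← hp', hk']
    · rw [← hp', hk']
  · refine ⟨q, hq, ?_, ?_, ?_⟩
    · rw [← hq', hk', hhead]
    · rw [← hq', hk', relLE_mul_right]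
    · rw [← hq', hk', relLE_mul_right]

theorem isTopEdge_of_isTop (hs : Stacking m a l P) {C : Finset X} {x : X} {i k : ℕ} (hi : i < m)
    (hk : k = i ∨ k = i + 1) (h : IsTop m a P C x (a k)) : IsTopEdge m a l P C x i := by
  intro y hy j hj he
  obtain ⟨n, hn, h1, h2, -⟩ := hs.edge_endpoint hi hj hk he
  exact h2.1 (h y hy n hn h1)

theorem isTop_zero_iff (hs : Stacking m a l P) {C : Finset X} {x : X} (hx : (a m)⁻¹ • x = x) :
    IsTop m a P C x (a m) ↔ IsTop m a P C x (a 0) := by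
  have h : (a m)⁻¹ • x = (a 0)⁻¹ • x := by rw [hx, hs.zero, inv_one, one_smul]
  constructor <;> intro H y hy j hj he
  · exact (H y hy j hj (he.trans h.symm)).trans hs.relLE_last_zero
  · exact (H y hy j hj (he.trans h)).trans hs.relLE_zero_last

theorem exists_max (hs : Stacking m a l P) (I : Finset ℕ) (hI : I.Nonempty) :
    ∃ i ∈ I, ∀ j ∈ I, RelLE P (a j) (a i) := by
  classical
  induction hI using Finset.Nonempty.cons_induction with
  | singleton n => exact ⟨n, by simp, by simp [RelLE.refl]⟩
  | cons n I hn hI ih =>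
    obtain ⟨i, hi, h⟩ := ih
    rcases hs.relLE_total (a n) (a i) with h' | h'
    · refine ⟨i, by simp [hi], ?_⟩
      intro j hj
      rcases Finset.mem_cons.1 hj with rfl | hj
      · exact h'
      · exact h j hj
    · refine ⟨n, by simp, ?_⟩
      intro j hj
      rcases Finset.mem_cons.1 hj with rfl | hj
      · exact RelLE.refl P _
      · exact (h j hj).trans h'

theorem exists_min (hs : Stacking m a l P) : ∃ i < m, ∀ j ≤ m, RelLE P (a i) (a j) := by
  have key : ∀ n ≤ m, ∃ i < m, ∀ j < n, RelLE P (a i) (a j) := by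
    intro n
    induction n with
    | zero => exact fun _ => ⟨0, hs.pos, by simp⟩
    | succ n ih =>
      intro hn
      obtain ⟨i, hi, h⟩ := ih (by omega)
      rcases hs.relLE_total (a i) (a n) with h' | h'
      · refine ⟨i, hi, fun j hj => ?_⟩
        rcases Nat.lt_succ_iff_lt_or_eq.1 hj with hj | rfl
        · exact h j hj
        · exact h'
      · refine ⟨n, by omega, fun j hj => ?_⟩
        rcases Nat.lt_succ_iff_lt_or_eq.1 hj with hj | rfl
        · exact h'.trans (h j hj)
        · exact RelLE.refl P _
  obtain ⟨i, hi, h⟩ := key m le_rfl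
  refine ⟨i, hi, fun j hj => ?_⟩
  rcases hj.lt_or_eq with hj | rfl
  · exact h j hj
  · exact (h 0 hs.pos).trans hs.relLE_zero_last

/-- Every vertex on one of the loops has a highest strand over it, at a position less than `m`. -/
theorem exists_isTop (hs : Stacking m a l P) {C : Finset X} (hC : ∀ x ∈ C, (a m)⁻¹ • x = x)
    {x : X} (hx : x ∈ C) {i : ℕ} (hi : i < m) :
    ∃ y ∈ C, ∃ j < m, (a j)⁻¹ • y = (a i)⁻¹ • x ∧ IsTop m a P C y (a j) := by
  classical
  obtain ⟨j, hj, hmax⟩ := hs.exists_max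
    ((Finset.range m).filter fun j => ∃ y ∈ C, (a j)⁻¹ • y = (a i)⁻¹ • x)
    ⟨i, Finset.mem_filter.2 ⟨Finset.mem_range.2 hi, x, hx, rfl⟩⟩
  simp only [Finset.mem_filter, Finset.mem_range] at hj hmax
  obtain ⟨hj, y, hy, hyx⟩ := hj
  refine ⟨y, hy, j, hj, hyx, ?_⟩
  intro z hz k hk hzy
  rcases hk.lt_or_eq with hk | rfl
  · exact hmax k ⟨hk, z, hz, hzy.trans hyx⟩
  · refine hs.relLE_last_zero.trans (hmax 0 ⟨hs.pos, z, hz, ?_⟩)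
    rw [← hyx, ← hzy, hC z hz, hs.zero, inv_one, one_smul]

/-- If a loop is highest over the starting point of each edge over which it is highest, then it is
highest everywhere: its maximal position is highest, and the property propagates backwards around
the loop. -/
theorem all_isTop (hs : Stacking m a l P) {C : Finset X} {x : X} (hx : (a m)⁻¹ • x = x)
    (h : ∀ i < m, IsTopEdge m a l P C x i → IsTop m a P C x (a i)) :
    ∀ i ≤ m, IsTop m a P C x (a i) := by
  have hdown : ∀ n ≤ m, IsTop m a P C x (a n) → ∀ k ≤ n, IsTop m a P C x (a k) := by
    intro n
    induction n with
    | zero =>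
      intro _ h0 k hk
      obtain rfl : k = 0 := by omega
      exact h0
    | succ n ih =>
      intro hn h1 k hk
      rcases hk.lt_or_eq with hk | rfl
      · exact ih (by omega) (h n hn (hs.isTopEdge_of_isTop hn (Or.inr rfl) h1)) k (by omega)
      · exact h1
  obtain ⟨i, hi, hmax⟩ := hs.exists_max (Finset.range (m + 1)) ⟨0, by simp⟩
  -- no strand of any loop is higher than the maximal position of `w`
  have htop : IsTop m a P C x (a i) := fun y _ j hj _ => hmax j (by simpa using by omega)
  exact hdown m le_rfl ((hs.isTop_zero_iff hx).2
    (hdown i (by simpa [Nat.lt_succ_iff] using hi) htop 0 (by omega)))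

/-- Suppose the loop at `x₀` revisits a vertex and no other loop has an edge crossed exactly once in
total. Then every loop has an edge over which it is highest, while it is not highest over the
starting point of that edge. Otherwise the loop is highest everywhere. For `x₀` this makes the two
strands through the repeated vertex equivalent. For `x ≠ x₀`, the lowest position of `w` is also
below every strand of every loop, so the edge leaving it is crossed by no other strand. -/
theorem exists_drop (hs : Stacking m a l P) {C : Finset X} (hC : ∀ x ∈ C, (a m)⁻¹ • x = x)
    {x₀ : X} (hx₀ : x₀ ∈ C) {p q : ℕ} (hpq : p < q) (hq : q < m)
    (hloop : (a p)⁻¹ • x₀ = (a q)⁻¹ • x₀)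
    (hirr : ¬∃ x ∈ C, x ≠ x₀ ∧ ∃ k < m, ∀ y ∈ C, ∀ j < m,
      edge a l y j = edge a l x k → y = x ∧ j = k)
    {x : X} (hx : x ∈ C) : ∃ i < m, IsTopEdge m a l P C x i ∧ ¬IsTop m a P C x (a i) := by
  by_contra! h
  have hall := hs.all_isTop (hC x hx) h
  by_cases hxx : x = x₀
  · subst hxx
    exact hs.separates p q hpq hq ⟨hall q hq.le x hx p (by omega) hloop,
      hall p (by omega) x hx q hq.le hloop.symm⟩
  · obtain ⟨k, hk, hmin⟩ := hs.exists_min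
    refine hirr ⟨x, hx, hxx, k, hk, fun y hy j hj he => ?_⟩
    obtain ⟨n, hn, h1, h2, h3⟩ := hs.edge_endpoint hk hj (Or.inl rfl) he
    exact hs.edge_injective hj hk he (h2.1 (hall k hk.le y hy n hn h1)) (h3.1 (hmin n hn))

/-- In the irreducible situation there are enough edges: loops plus vertices do not exceed edges.
Strands highest over an edge inject into edges; they contain the strands highest over a vertex,
which surject onto vertices; and each loop contributes a strand to the difference. -/
theorem card_le (hs : Stacking m a l P) [DecidableEq X] [DecidableEq (X × S)]
    {C : Finset X} (hC : ∀ x ∈ C, (a m)⁻¹ • x = x)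
    {x₀ : X} (hx₀ : x₀ ∈ C) {p q : ℕ} (hpq : p < q) (hq : q < m)
    (hloop : (a p)⁻¹ • x₀ = (a q)⁻¹ • x₀)
    (hirr : ¬∃ x ∈ C, x ≠ x₀ ∧ ∃ k < m, ∀ y ∈ C, ∀ j < m,
      edge a l y j = edge a l x k → y = x ∧ j = k) :
    C.card + ((C ×ˢ Finset.range m).image fun z => (a z.2)⁻¹ • z.1).card ≤
      ((C ×ˢ Finset.range m).image fun z => edge a l z.1 z.2).card := by
  classical
  set W := C ×ˢ Finset.range m with hW
  set A := W.filter fun z => IsTopEdge m a l P C z.1 z.2 with hA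
  set B := W.filter fun z => IsTop m a P C z.1 (a z.2) with hB
  have memW : ∀ z, z ∈ W ↔ z.1 ∈ C ∧ z.2 < m := by simp [hW]
  have hBA : B ⊆ A := by
    intro z hz
    obtain ⟨h1, h2⟩ := Finset.mem_filter.1 hz
    exact Finset.mem_filter.2 ⟨h1, hs.isTopEdge_of_isTop ((memW z).1 h1).2 (Or.inl rfl) h2⟩
  have h1 : A.card ≤ (W.image fun z => edge a l z.1 z.2).card := by
    refine Finset.card_le_card_of_injOn (fun z => edge a l z.1 z.2) ?_ ?_
    · intro z hz
      exact Finset.mem_image_of_mem _ (Finset.mem_filter.1 hz).1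
    · intro z hz z' hz' he
      obtain ⟨hz1, hz2⟩ := Finset.mem_filter.1 hz
      obtain ⟨hz1', hz2'⟩ := Finset.mem_filter.1 hz'
      rw [memW] at hz1 hz1'
      have := hs.edge_injective hz1.2 hz1'.2 he (hz2' _ hz1.1 _ hz1.2 he)
        (hz2 _ hz1'.1 _ hz1'.2 he.symm)
      exact Prod.ext this.1 this.2
  have h2 : (W.image fun z => (a z.2)⁻¹ • z.1).card ≤ B.card := by
    refine (Finset.card_le_card ?_).trans (Finset.card_image_le (f := fun z => (a z.2)⁻¹ • z.1))
    intro v hv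
    obtain ⟨z, hz, rfl⟩ := Finset.mem_image.1 hv
    rw [memW] at hz
    obtain ⟨y, hy, j, hj, hyz, htop⟩ := hs.exists_isTop hC hz.1 hz.2
    exact Finset.mem_image.2 ⟨(y, j), Finset.mem_filter.2 ⟨(memW _).2 ⟨hy, hj⟩, htop⟩, hyz⟩
  have h3 : C.card ≤ (A \ B).card := by
    have hd : ∀ x : X, ∃ i, x ∈ C → i < m ∧ IsTopEdge m a l P C x i ∧ ¬IsTop m a P C x (a i) := by
      intro x
      by_cases hx : x ∈ C
      · obtain ⟨i, hi⟩ := hs.exists_drop hC hx₀ hpq hq hloop hirr hx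
        exact ⟨i, fun _ => hi⟩
      · exact ⟨0, fun h => (hx h).elim⟩
    choose ι hι using hd
    refine Finset.card_le_card_of_injOn (fun x => (x, ι x)) ?_ ?_
    · intro x hx
      obtain ⟨h1, h2, h3⟩ := hι x hx
      refine Finset.mem_sdiff.2 ⟨Finset.mem_filter.2 ⟨(memW _).2 ⟨hx, h1⟩, h2⟩, ?_⟩
      intro h
      exact h3 (Finset.mem_filter.1 h).2
    · intro x _ y _ h
      exact congrArg Prod.fst h
  rw [Finset.card_sdiff_of_subset hBA] at h3
  have := Finset.card_le_card hBA
  omega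

/-- Both endpoints of an edge on a loop are among the vertices visited at positions less than `m`. -/
theorem endpoints_mem (hs : Stacking m a l P) [DecidableEq X]
    {C : Finset X} (hC : ∀ x ∈ C, (a m)⁻¹ • x = x) {x : X} (hx : x ∈ C) {i : ℕ} (hi : i < m) :
    (edge a l x i).1 ∈ (C ×ˢ Finset.range m).image (fun z => (a z.2)⁻¹ • z.1) ∧
    (FreeGroup.of (edge a l x i).2)⁻¹ • (edge a l x i).1 ∈
      (C ×ˢ Finset.range m).image (fun z => (a z.2)⁻¹ • z.1) := by
  have key : ∀ n ≤ m, (a n)⁻¹ • x ∈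
      (C ×ˢ Finset.range m).image (fun z => (a z.2)⁻¹ • z.1) := by
    intro n hn
    rcases hn.lt_or_eq with hn | rfl
    · exact Finset.mem_image.2 ⟨(x, n), by simp [hx, hn], rfl⟩
    · exact Finset.mem_image.2 ⟨(x, 0), by simp [hx, hs.pos], by
        simp only [hC x hx, hs.zero, inv_one, one_smul]⟩
  have hhead : (FreeGroup.of (edge a l x i).2)⁻¹ • (edge a l x i).1 =
      (tail a l i * FreeGroup.of (l i).1)⁻¹ • x := by
    rw [mul_inv_rev, mul_smul]; rfl
  rw [hhead]
  change (tail a l i)⁻¹ • x ∈ _ ∧ _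
  rcases hs.tail_cases hi with ⟨-, h2, h3⟩ | ⟨-, h2, h3⟩ <;> rw [h3, h2]
  · exact ⟨key i hi.le, key (i + 1) hi⟩
  · exact ⟨key (i + 1) hi, key i hi.le⟩

variable (m a l) in
/-- The edges crossed by the loops based in `C`. -/
def edgeSet (C : Finset X) : Set (X × S) := {e | ∃ x ∈ C, ∃ i < m, edge a l x i = e}

/-- The count of loops, vertices and edges gives a cochain which sums to zero around every loop but
is not a coboundary. -/
theorem exists_cocycle_irreducible (hs : Stacking m a l P)
    {C : Finset X} (hC : ∀ x ∈ C, (a m)⁻¹ • x = x)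
    {x₀ : X} (hx₀ : x₀ ∈ C) {p q : ℕ} (hpq : p < q) (hq : q < m)
    (hloop : (a p)⁻¹ • x₀ = (a q)⁻¹ • x₀)
    (hirr : ¬∃ x ∈ C, x ≠ x₀ ∧ ∃ k < m, ∀ y ∈ C, ∀ j < m,
      edge a l y j = edge a l x k → y = x ∧ j = k) :
    ∃ f : X × S → ℚ, (∀ x ∈ C, ∑ i ∈ Finset.range m, sgn l i * f (edge a l x i) = 0) ∧
      ¬IsCoboundaryOn (edgeSet m a l C) f := by
  classical
  have hcard := hs.card_le hC hx₀ hpq hq hloop hirr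
  have hend := fun x (hx : x ∈ C) i (hi : i < m) => hs.endpoints_mem hC hx hi
  set V := (C ×ˢ Finset.range m).image fun z => (a z.2)⁻¹ • z.1
  set E := (C ×ˢ Finset.range m).image fun z => edge a l z.1 z.2 with hE
  have memE : ∀ e, e ∈ E ↔ e ∈ edgeSet m a l C := by
    intro e
    simp [hE, edgeSet, and_assoc]
  let extE : (E → ℚ) →ₗ[ℚ] (X × S → ℚ) := Function.ExtendByZero.linearMap ℚ Subtype.val
  let extV : (V → ℚ) →ₗ[ℚ] (X → ℚ) := Function.ExtendByZero.linearMap ℚ Subtype.val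
  have hextE : ∀ f e, extE f (e : E).1 = f e := fun f e =>
    Subtype.val_injective.extend_apply f 0 e
  have hextV : ∀ f v, extV f (v : V).1 = f v := fun f v =>
    Subtype.val_injective.extend_apply f 0 v
  let σ : (E → ℚ) →ₗ[ℚ] (C → ℚ) := LinearMap.pi fun x =>
    ∑ i ∈ Finset.range m, sgn l i • (LinearMap.proj (edge a l (x : X) i) ∘ₗ extE)
  let δ : (V → ℚ) →ₗ[ℚ] (E → ℚ) := LinearMap.pi fun e =>
    LinearMap.proj (φ := fun _ : X => ℚ) ((FreeGroup.of e.1.2)⁻¹ • e.1.1) ∘ₗ extV -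
      LinearMap.proj (φ := fun _ : X => ℚ) e.1.1 ∘ₗ extV
  have hσ : ∀ f x, σ f x = ∑ i ∈ Finset.range m, sgn l i * extE f (edge a l (x : X) i) := by
    intro f x
    simp [σ]
  have hδ : ∀ h e, δ h e = extV h ((FreeGroup.of e.1.2)⁻¹ • e.1.1) - extV h e.1.1 := by
    intro h e
    simp [δ]
  have hendE : ∀ e : E, e.1.1 ∈ V ∧ (FreeGroup.of e.1.2)⁻¹ • e.1.1 ∈ V := by
    rintro ⟨e, he⟩
    obtain ⟨x, hx, i, hi, rfl⟩ := (memE e).1 he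
    exact hend x hx i hi
  have hne : Nonempty V := by
    obtain ⟨h, -⟩ := hend x₀ hx₀ 0 hs.pos
    exact ⟨⟨_, h⟩⟩
  obtain ⟨f, hf, hfr⟩ := exists_ker_not_mem_range σ δ
    (by
      funext e
      rw [hδ, hextV _ ⟨_, (hendE e).1⟩, hextV _ ⟨_, (hendE e).2⟩]
      simp)
    (by simpa using hcard)
  refine ⟨extE f, fun x hx => ?_, ?_⟩
  · rw [← hσ f ⟨x, hx⟩, hf]; rfl
  · rintro ⟨h, hh⟩
    apply hfr
    refine ⟨fun v => h v, ?_⟩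
    funext e
    rw [hδ, hextV _ ⟨_, (hendE e).1⟩, hextV _ ⟨_, (hendE e).2⟩, ← hextE f e,
      hh e.1 ((memE _).1 e.2)]

/-- Reduction to the irreducible case: a loop `x ≠ x₀` having an edge crossed exactly once in total
can be removed from `C`, since the value of the cochain on that edge can be adjusted to make the
sum around `x` vanish without affecting the other loops. -/
theorem exists_cocycle (hs : Stacking m a l P)
    {C : Finset X} (hC : ∀ x ∈ C, (a m)⁻¹ • x = x)
    {x₀ : X} (hx₀ : x₀ ∈ C) {p q : ℕ} (hpq : p < q) (hq : q < m)
    (hloop : (a p)⁻¹ • x₀ = (a q)⁻¹ • x₀) :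
    ∃ f : X × S → ℚ, (∀ x ∈ C, ∑ i ∈ Finset.range m, sgn l i * f (edge a l x i) = 0) ∧
      ¬IsCoboundaryOn (edgeSet m a l C) f := by
  classical
  induction C using Finset.strongInduction with
  | H C ih =>
    by_cases hirr : ∃ x ∈ C, x ≠ x₀ ∧ ∃ k < m, ∀ y ∈ C, ∀ j < m,
      edge a l y j = edge a l x k → y = x ∧ j = k
    · obtain ⟨x, hx, hxx, k, hk, hfree⟩ := hirr
      obtain ⟨f, hf, hfc⟩ := ih (C.erase x) (Finset.erase_ssubset hx)
        (fun y hy => hC y (Finset.mem_of_mem_erase hy)) (Finset.mem_erase.2 ⟨hxx.symm, hx₀⟩)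
      set c := ∑ i ∈ Finset.range m, sgn l i * f (edge a l x i) with hc
      have hother : ∀ y ∈ C.erase x, ∀ i < m, edge a l y i ≠ edge a l x k := by
        intro y hy i hi h
        exact (Finset.mem_erase.1 hy).1 (hfree y (Finset.mem_of_mem_erase hy) i hi h).1
      refine ⟨fun e => f e - if e = edge a l x k then sgn l k * c else 0, ?_, ?_⟩
      · intro y hy
        by_cases hyx : y = x
        · subst hyx
          have h1 : ∀ i ∈ Finset.range m, sgn l i *
              (f (edge a l y i) - if edge a l y i = edge a l y k then sgn l k * c else 0) =
              sgn l i * f (edge a l y i) - if i = k then c else 0 := by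
            intro i hi
            by_cases hik : i = k
            · subst hik
              rw [if_pos rfl, if_pos rfl, mul_sub, ← mul_assoc, sgn_mul_self, one_mul]
            · rw [if_neg hik, if_neg, sub_zero, sub_zero]
              intro h
              exact hik (hfree y hy i (Finset.mem_range.1 hi) h).2
          rw [Finset.sum_congr rfl h1, Finset.sum_sub_distrib, ← hc,
            Finset.sum_ite_eq' (Finset.range m) k, if_pos (Finset.mem_range.2 hk), sub_self]
        · have hy' : y ∈ C.erase x := Finset.mem_erase.2 ⟨hyx, hy⟩
          refine (Finset.sum_congr rfl fun i hi => ?_).trans (hf y hy')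
          dsimp only
          rw [if_neg (hother y hy' i (Finset.mem_range.1 hi)), sub_zero]
      · rintro ⟨h, hh⟩
        refine hfc ⟨h, ?_⟩
        rintro e ⟨y, hy, i, hi, rfl⟩
        have := hh _ ⟨y, Finset.mem_of_mem_erase hy, i, hi, rfl⟩
        dsimp only at this
        rwa [if_neg (hother y hy i hi), sub_zero] at this
    · exact hs.exists_cocycle_irreducible hC hx₀ hpq hq hloop hirr

end Stacking

/-! ### Crossed homomorphisms -/

/-- A cochain extends to a crossed homomorphism, the integral of `f` along the path from `x` spelled
by `g`: let the generator `s` act on `X × ℚ` by moving `x` to `s⁻¹ • x` and adding `f (x, s)`. -/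
theorem exists_crossedHom (f : X × S → ℚ) :
    ∃ σ : X → FreeGroup S → ℚ, (∀ x g h, σ x (g * h) = σ x g + σ (g⁻¹ • x) h) ∧
      ∀ x s, σ x (FreeGroup.of s) = f (x, s) := by
  let Ψ : FreeGroup S →* Equiv.Perm (X × ℚ) := FreeGroup.lift fun s =>
    { toFun := fun z => (FreeGroup.of s • z.1, z.2 - f (FreeGroup.of s • z.1, s))
      invFun := fun z => ((FreeGroup.of s)⁻¹ • z.1, z.2 + f (z.1, s))
      left_inv := fun z => by simp
      right_inv := fun z => by simp }
  have hΨ : ∀ s z, (Ψ (FreeGroup.of s))⁻¹ z =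
      ((FreeGroup.of s)⁻¹ • z.1, z.2 + f (z.1, s)) := by
    intro s z
    simp only [Ψ, FreeGroup.lift_apply_of]
    rfl
  have hΨ' : ∀ s z, Ψ (FreeGroup.of s) z =
      (FreeGroup.of s • z.1, z.2 - f (FreeGroup.of s • z.1, s)) := by
    intro s z
    simp only [Ψ, FreeGroup.lift_apply_of]
    rfl
  let σ : X → FreeGroup S → ℚ := fun x g => ((Ψ g)⁻¹ (x, 0)).2
  have key : ∀ g x t, (Ψ g)⁻¹ (x, t) = (g⁻¹ • x, t + σ x g) := by
    intro g
    induction g using FreeGroup.induction_on with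
    | C1 =>
      intro x t
      change (Ψ 1)⁻¹ (x, t) = ((1 : FreeGroup S)⁻¹ • x, t + ((Ψ 1)⁻¹ (x, 0)).2)
      rw [map_one, inv_one, inv_one, one_smul, Equiv.Perm.one_apply, Equiv.Perm.one_apply,
        add_zero]
    | of s => intro x t; simp only [σ, hΨ, zero_add]
    | inv_of s _ =>
      intro x t
      change (Ψ (FreeGroup.of s)⁻¹)⁻¹ (x, t) =
        ((FreeGroup.of s)⁻¹⁻¹ • x, t + ((Ψ (FreeGroup.of s)⁻¹)⁻¹ (x, 0)).2)
      rw [map_inv, inv_inv, inv_inv, hΨ', hΨ']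
      refine Prod.ext rfl ?_
      dsimp only
      ring
    | mul g h ihg ihh =>
      intro x t
      have h1 : ∀ t, (Ψ (g * h))⁻¹ (x, t) =
          ((g * h)⁻¹ • x, t + σ x g + σ (g⁻¹ • x) h) := by
        intro t
        rw [map_mul, mul_inv_rev, Equiv.Perm.mul_apply, ihg, ihh, mul_inv_rev, mul_smul]
      have h2 : σ x (g * h) = σ x g + σ (g⁻¹ • x) h := by
        change ((Ψ (g * h))⁻¹ (x, 0)).2 = _
        rw [h1, zero_add]
      rw [h1, h2, add_assoc]
  refine ⟨σ, fun x g h => ?_, fun x s => ?_⟩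
  · change ((Ψ (g * h))⁻¹ (x, 0)).2 = _
    rw [map_mul, mul_inv_rev, Equiv.Perm.mul_apply, key, key, zero_add]
  · change ((Ψ (FreeGroup.of s))⁻¹ (x, 0)).2 = _
    rw [hΨ, zero_add]

namespace Stacking

variable {m : ℕ} {a : ℕ → FreeGroup S} {l : ℕ → S × Bool} {P : Submonoid (FreeGroup S)}

/-- Along a prefix of `w`, the crossed homomorphism is the signed sum of `f` over the edges crossed. -/
theorem crossedHom_prefix (hs : Stacking m a l P) {f : X × S → ℚ} {σ : X → FreeGroup S → ℚ}
    (hσ : ∀ x g h, σ x (g * h) = σ x g + σ (g⁻¹ • x) h)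
    (hσf : ∀ x s, σ x (FreeGroup.of s) = f (x, s)) (x : X) :
    ∀ n ≤ m, σ x (a n) = ∑ i ∈ Finset.range n, sgn l i * f (edge a l x i) := by
  intro n
  induction n with
  | zero =>
    intro _
    have := hσ x 1 1
    rw [mul_one, inv_one, one_smul] at this
    rw [hs.zero, Finset.sum_range_zero]
    linarith
  | succ n ih =>
    intro hn
    rw [Finset.sum_range_succ, ← ih (by omega)]
    rcases hs.tail_cases hn with ⟨h1, h2, h3⟩ | ⟨h1, h2, h3⟩
    · rw [← h3, hσ, hσf, edge, sgn, h1, if_pos rfl, one_mul, h2]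
    · have := hσ x (tail a l n) (FreeGroup.of (l n).1)
      rw [h3, hσf] at this
      rw [this, edge, sgn, h1, ← h2]
      simp

end Stacking

end Counting

/-! ### Stackings and characters killing conjugates of the relator -/

section Main

variable {S : Type*}

theorem HasCharacter.mono {G : Type*} [Group G] {R R' D : Set G} (h : HasCharacter R' D)
    (hR : R ⊆ R') : HasCharacter R D := by
  obtain ⟨K, ψ, h1, h2, h3, h4, h5⟩ := h
  exact ⟨K, ψ, h1, hR.trans h2, h3, fun r hr => h4 r (hR hr), h5⟩

/-- A subgroup generated by finitely many conjugates of `w`, one of them `w` itself, and a set `D`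
containing some `a q * (a p)⁻¹`, has a nonzero character killing those conjugates. Let `K` be the
subgroup and `X = F ⧸ K`; a conjugate `c * w * c⁻¹ ∈ K` is a `w`-loop in the graph on `X` based at
the coset `c⁻¹ K`, and `a q * (a p)⁻¹ ∈ K` says that the loop based at `K` revisits a vertex.
Integrate the cochain of `Stacking.exists_cocycle`. -/
theorem Stacking.hasCharacter {m : ℕ} {a : ℕ → FreeGroup S} {l : ℕ → S × Bool}
    {P : Submonoid (FreeGroup S)} (hs : Stacking m a l P) {A : Finset (FreeGroup S)} (hA : 1 ∈ A)
    {D : Set (FreeGroup S)} {p q : ℕ} (hpq : p < q) (hq : q < m) (hd : a q * (a p)⁻¹ ∈ D) :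
    HasCharacter {r | ∃ c ∈ A, c * a m * c⁻¹ = r} D := by
  classical
  set R : Set (FreeGroup S) := {r | ∃ c ∈ A, c * a m * c⁻¹ = r} with hR
  set K := Subgroup.closure (D ∪ R) with hK
  let o : FreeGroup S ⧸ K := ((1 : FreeGroup S) : FreeGroup S ⧸ K)
  have hmk : ∀ g : FreeGroup S, g⁻¹ • o = ((g⁻¹ : FreeGroup S) : FreeGroup S ⧸ K) := by
    intro g
    change ((g⁻¹ * 1 : FreeGroup S) : FreeGroup S ⧸ K) = _
    rw [mul_one]
  have hcos : ∀ g h : FreeGroup S, g⁻¹ • o = h⁻¹ • o ↔ h * g⁻¹ ∈ K := by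
    intro g h
    rw [hmk, hmk, eq_comm, QuotientGroup.eq, inv_inv]
  have hfix : ∀ g ∈ K, g⁻¹ • o = o := by
    intro g hg
    have := (hcos g 1).2 (by simpa using hg)
    rwa [inv_one, one_smul] at this
  have hRK : ∀ c ∈ A, c * a m * c⁻¹ ∈ K := fun c hc =>
    Subgroup.subset_closure (Or.inr ⟨c, hc, rfl⟩)
  have hwc : ∀ c ∈ A, (a m)⁻¹ • c⁻¹ • o = c⁻¹ • o := by
    intro c hc
    rw [← mul_smul, ← mul_inv_rev, eq_comm, hcos]
    exact hRK c hc
  obtain ⟨f, hf, hfc⟩ := hs.exists_cocycle (C := A.image fun c => c⁻¹ • o) (x₀ := o)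
    (by
      intro x hx
      obtain ⟨c, hc, rfl⟩ := Finset.mem_image.1 hx
      exact hwc c hc)
    (Finset.mem_image.2 ⟨1, hA, by simp⟩) hpq hq
    ((hcos _ _).2 (Subgroup.subset_closure (Or.inl hd)))
  obtain ⟨σ, hσ, hσf⟩ := exists_crossedHom f
  have hσ1 : ∀ x, σ x 1 = 0 := by
    intro x
    have := hσ x 1 1
    rw [mul_one, inv_one, one_smul] at this
    linarith
  have hσK : ∀ g ∈ K, ∀ h, σ o (g * h) = σ o g + σ o h := by
    intro g hg h
    rw [hσ, hfix g hg]
  refine hasCharacter_of_closure (σ o) (fun g hg h _ => hσK g hg h) ?_ ?_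
  · rintro r ⟨c, hc, rfl⟩
    have h1 : σ (c⁻¹ • o) (a m) = 0 := by
      rw [hs.crossedHom_prefix hσ hσf _ m le_rfl]
      exact hf _ (Finset.mem_image_of_mem _ hc)
    have h2 := hσ o c c⁻¹
    rw [mul_inv_cancel, hσ1] at h2
    rw [mul_assoc, hσ, hσ, h1, hwc c hc]
    linarith
  · by_contra! hzero
    apply hfc
    -- if the integral vanishes on `K`, it descends to a potential for `f` on `F ⧸ K`
    have hlift : ∀ x : FreeGroup S ⧸ K, ∃ g : FreeGroup S, g⁻¹ • o = x := by
      intro x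
      induction x using QuotientGroup.induction_on with
      | H g => exact ⟨g⁻¹, by rw [hmk, inv_inv]⟩
    choose γ hγ using hlift
    have hγσ : ∀ g, σ o (γ (g⁻¹ • o)) = σ o g := by
      intro g
      have hk : γ (g⁻¹ • o) * g⁻¹ ∈ K := (hcos _ _).1 (hγ (g⁻¹ • o)).symm
      have := hσK _ hk g
      rwa [inv_mul_cancel_right, hzero _ hk, zero_add] at this
    refine ⟨fun x => σ o (γ x), ?_⟩
    rintro ⟨x, s⟩ -
    obtain ⟨g, rfl⟩ : ∃ g : FreeGroup S, g⁻¹ • o = x := ⟨γ x, hγ x⟩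
    change f (g⁻¹ • o, s) = σ o (γ ((FreeGroup.of s)⁻¹ • g⁻¹ • o)) - σ o (γ (g⁻¹ • o))
    rw [← mul_smul, ← mul_inv_rev, hγσ, hγσ, hσ, hσf]
    ring

/-- Length comparison, valid because powers of a cyclically reduced word are reduced. -/
theorem mk_take_ne {L : List (S × Bool)} (hL : FreeGroup.IsCyclicallyReduced L) {p q : ℕ} (n : ℕ)
    (hq : q < L.length) :
    FreeGroup.mk (L.take q) ≠ FreeGroup.mk L ^ (n + 1) * FreeGroup.mk (L.take p) := by
  classical
  intro h
  rw [FreeGroup.pow_mk, FreeGroup.mul_mk] at h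
  have h1 : FreeGroup.IsReduced (L.take q) := hL.isReduced.infix (L.take_prefix q).isInfix
  have h2 : FreeGroup.IsReduced ((List.replicate (n + 1) L).flatten ++ L.take p) := by
    have h3 := (hL.flatten_replicate (n + 2)).isReduced
    refine h3.infix (List.IsPrefix.isInfix ?_)
    rw [List.replicate_succ' (n := n + 1), List.flatten_append, List.flatten_singleton]
    exact (List.prefix_append_right_inj _).2 (L.take_prefix p)
  have h3 := congrArg FreeGroup.toWord h
  rw [FreeGroup.toWord_mk, FreeGroup.toWord_mk, h1.reduce_eq, h2.reduce_eq] at h3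
  have h4 := congrArg List.length h3
  rw [List.replicate_succ] at h4
  simp at h4
  omega

theorem prefix_not_mem_zpowers {L : List (S × Bool)} (hL : FreeGroup.IsCyclicallyReduced L)
    {p q : ℕ} (hpq : p < q) (hq : q < L.length) :
    FreeGroup.mk (L.take q) * (FreeGroup.mk (L.take p))⁻¹ ∉
      Subgroup.zpowers (FreeGroup.mk L) := by
  classical
  rintro ⟨k, hk⟩
  have hk' : FreeGroup.mk (L.take q) = FreeGroup.mk L ^ k * FreeGroup.mk (L.take p) := by
    simp only at hk
    rw [hk, inv_mul_cancel_right]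
  rcases lt_trichotomy k 0 with h | rfl | h
  · obtain ⟨n, rfl⟩ : ∃ n : ℕ, k = -((n + 1 : ℕ) : ℤ) := ⟨(-k - 1).toNat, by omega⟩
    refine mk_take_ne hL (p := q) (q := p) n (by omega) ?_
    rw [hk', zpow_neg, zpow_natCast, mul_inv_cancel_left]
  · have h1 : FreeGroup.IsReduced (L.take q) := hL.isReduced.infix (L.take_prefix q).isInfix
    have h2 : FreeGroup.IsReduced (L.take p) := hL.isReduced.infix (L.take_prefix p).isInfix
    rw [zpow_zero, one_mul] at hk'
    have h3 := congrArg FreeGroup.toWord hk'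
    rw [FreeGroup.toWord_mk, FreeGroup.toWord_mk, h1.reduce_eq, h2.reduce_eq] at h3
    have h4 := congrArg List.length h3
    simp at h4
    omega
  · obtain ⟨n, rfl⟩ : ∃ n : ℕ, k = ((n + 1 : ℕ) : ℤ) := ⟨(k - 1).toNat, by omega⟩
    exact mk_take_ne hL (p := p) n hq (by rw [hk', zpow_natCast])

/-- A cyclically reduced word which is not a proper power has a stacking. -/
theorem exists_stacking {L : List (S × Bool)} (hL : L ≠ [])
    (hcr : FreeGroup.IsCyclicallyReduced L)
    (hpp : ∀ (u : FreeGroup S) (k : ℤ), FreeGroup.mk L = u ^ k → k = 1 ∨ k = -1) :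
    ∃ P, Stacking L.length (fun i => FreeGroup.mk (L.take i)) (fun i => L.getD i (L.head hL)) P := by
  classical
  obtain ⟨P, hPw, hPt, hPT⟩ := exists_submonoid (R := {FreeGroup.mk L})
    (T := {d | ∃ p q, p < q ∧ q < L.length ∧
      FreeGroup.mk (L.take q) * (FreeGroup.mk (L.take p))⁻¹ = d}) (by
      rintro D R₀ hR₀ ⟨d, hdD, p, q, hpq, hq, rfl⟩
      exact (hasCharacter_free hpp (Finset.mem_coe.2 hdD)
        (prefix_not_mem_zpowers hcr hpq hq)).mono hR₀)
  have hlen : 0 < L.length := List.length_pos_iff.2 hL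
  refine ⟨P, hlen, rfl, ?_, ?_, hPt, ?_, ?_, ?_⟩
  · intro i hi
    rw [FreeGroup.mul_mk, List.getD_eq_getElem _ _ hi, List.take_append_getElem hi]
  · intro i hi j hj hij h
    rw [FreeGroup.isCyclicallyReduced_iff] at hcr
    simp only [List.getD_eq_getElem _ _ hi, List.getD_eq_getElem _ _ hj] at h ⊢
    rcases hij with rfl | ⟨rfl, hm⟩
    · exact (List.isChain_iff_getElem.1 hcr.1 j hi h.symm).symm
    · have h1 : L.getLast? = some L[j] := by
        rw [List.getLast?_eq_getElem?, ← hm, Nat.add_sub_cancel, List.getElem?_eq_getElem hj]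
      have h2 : L.head? = some L[0] := by
        rw [List.head?_eq_getElem?, List.getElem?_eq_getElem hi]
      exact (hcr.2 _ h1 _ h2 h.symm).symm
  · simpa using (hPw _ rfl).1
  · simpa using (hPw _ rfl).2
  · rintro p q hpq hq ⟨h1, h2⟩
    refine hPT _ ⟨p, q, hpq, hq, rfl⟩ ⟨h1, ?_⟩
    rw [mul_inv_rev, inv_inv]
    exact h2

end Main

end PrefixOrder

/-- **Existence of a right-invariant preorder distinguishing the prefixes of
the relator.**  Let `F` be the free group on `S` and let `w` be represented by
a nonempty reduced, cyclically reduced word `L` which is not a proper power.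
Then the one-relator group `L = F/⟨⟨w⟩⟩` carries a total preorder, invariant
under right multiplication, which distinguishes the images of the proper
prefixes `a_j` of the relator. -/
theorem exists_right_invariant_preorder_distinguishing_prefixes
    {S : Type*} (L : List (S × Bool)) (hL : L ≠ [])
    -- `L` is reduced: no letter is immediately followed by its inverse
    (hred : List.Chain' (fun a b : S × Bool => ¬(b.1 = a.1 ∧ b.2 = !a.2)) L)
    -- `L` is cyclically reduced: the last letter is not the inverse of the first
    (hcyc : ¬((L.head hL).1 = (L.getLast hL).1 ∧ (L.head hL).2 = !(L.getLast hL).2))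
    -- `w` is not a proper power
    (hpp : ∀ (u : FreeGroup S) (k : ℤ), FreeGroup.mk L = u ^ k → k = 1 ∨ k = -1) :
    ∃ r : (FreeGroup S ⧸ Subgroup.normalClosure {FreeGroup.mk L}) →
          (FreeGroup S ⧸ Subgroup.normalClosure {FreeGroup.mk L}) → Prop,
      -- `r` is reflexive
      (∀ a, r a a) ∧
      -- `r` is transitive
      (∀ a b c, r a b → r b c → r a c) ∧
      -- `r` is total
      (∀ a b, r a b ∨ r b a) ∧
      -- `r` is right-invariant
      (∀ a b g, r a b → r (a * g) (b * g)) ∧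
      -- `r` distinguishes the images of the prefixes `a_j`, `0 ≤ j < m`
      (∀ i j : ℕ, i < j → j < L.length →
        ¬(r ((QuotientGroup.mk (FreeGroup.mk (L.take i))) :
              FreeGroup S ⧸ Subgroup.normalClosure {FreeGroup.mk L})
             (QuotientGroup.mk (FreeGroup.mk (L.take j))) ∧
          r ((QuotientGroup.mk (FreeGroup.mk (L.take j))) :
              FreeGroup S ⧸ Subgroup.normalClosure {FreeGroup.mk L})
             (QuotientGroup.mk (FreeGroup.mk (L.take i))))) := by
  classical
  have hcr : FreeGroup.IsCyclicallyReduced L := by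
    rw [FreeGroup.isCyclicallyReduced_iff]
    refine ⟨hred.imp fun x y h h1 => ?_, ?_⟩
    · by_contra h2
      exact h ⟨h1.symm, by cases hx : x.2 <;> cases hy : y.2 <;> simp_all⟩
    · intro x hx y hy h1
      rw [List.getLast?_eq_getLast_of_ne_nil hL, Option.mem_some_iff] at hx
      rw [List.head?_eq_some_head hL, Option.mem_some_iff] at hy
      subst hx hy
      by_contra h2
      exact hcyc ⟨h1.symm, by
        cases hx : (L.head hL).2 <;> cases hy : (L.getLast hL).2 <;> simp_all⟩
  obtain ⟨P₀, hs⟩ := PrefixOrder.exists_stacking hL hcr hpp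
  obtain ⟨P, hPR, hPt, hPT⟩ := PrefixOrder.exists_submonoid
    (R := {r | ∃ c : FreeGroup S, c * FreeGroup.mk L * c⁻¹ = r})
    (T := {d | ∃ p q, p < q ∧ q < L.length ∧
      FreeGroup.mk (L.take q) * (FreeGroup.mk (L.take p))⁻¹ = d}) (by
      rintro D R₀ hR₀ ⟨d, hdD, p, q, hpq, hq, rfl⟩
      have hR : ∀ r, ∃ c, r ∈ R₀ → c * FreeGroup.mk L * c⁻¹ = r := by
        intro r
        by_cases hr : r ∈ R₀
        · obtain ⟨c, hc⟩ := hR₀ hr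
          exact ⟨c, fun _ => hc⟩
        · exact ⟨1, fun h => (hr h).elim⟩
      choose c hc using hR
      refine (hs.hasCharacter (A := insert 1 (R₀.image c)) (Finset.mem_insert_self _ _)
        hpq hq (Finset.mem_coe.2 hdD)).mono ?_
      intro r hr
      exact ⟨c r, Finset.mem_insert_of_mem (Finset.mem_image_of_mem _ hr),
        by rw [List.take_length]; exact hc r hr⟩)
  -- `P ∩ P⁻¹` is a subgroup containing the conjugates of the relator
  set N := Subgroup.normalClosure {FreeGroup.mk L}
  have hN : ∀ n ∈ N, n ∈ P := by
    have hconj : ∀ x ∈ Group.conjugatesOfSet {FreeGroup.mk L}, x ∈ P ∧ x⁻¹ ∈ P := by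
      intro x hx
      obtain ⟨y, hy, hyx⟩ := Group.mem_conjugatesOfSet_iff.1 hx
      rw [Set.mem_singleton_iff] at hy
      subst hy
      exact hPR x (isConj_iff.1 hyx)
    intro n hn
    have : n ∈ P ∧ n⁻¹ ∈ P := by
      induction hn using Subgroup.closure_induction with
      | mem x hx => exact hconj x hx
      | one => simp [P.one_mem]
      | mul x y _ _ hx hy =>
        rw [mul_inv_rev]
        exact ⟨P.mul_mem hx.1 hy.1, P.mul_mem hy.2 hx.2⟩
      | inv x _ hx => rw [inv_inv]; exact hx.symm
    exact this.1
  let Q : Submonoid (FreeGroup S ⧸ N) := P.map (QuotientGroup.mk' N)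
  have hQ : ∀ g : FreeGroup S, (g : FreeGroup S ⧸ N) ∈ Q → g ∈ P := by
    rintro g ⟨h, hh, hhg⟩
    have : h⁻¹ * g ∈ N := QuotientGroup.eq.1 hhg
    simpa using P.mul_mem hh (hN _ this)
  have hQt : ∀ x, x ∈ Q ∨ x⁻¹ ∈ Q := by
    intro x
    induction x using QuotientGroup.induction_on with
    | H g =>
      rcases hPt g with h | h
      · exact Or.inl ⟨g, h, rfl⟩
      · exact Or.inr ⟨g⁻¹, h, rfl⟩
  refine ⟨fun x y => y * x⁻¹ ∈ Q, ?_, ?_, ?_, ?_, ?_⟩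
  · intro x
    simp [Q.one_mem]
  · intro x y z h1 h2
    simpa [mul_assoc] using Q.mul_mem h2 h1
  · intro x y
    have h := hQt (y * x⁻¹)
    rwa [show (y * x⁻¹)⁻¹ = x * y⁻¹ by group] at h
  · intro x y g h
    simpa [mul_assoc] using h
  · rintro i j hij hj ⟨h1, h2⟩
    refine hPT _ ⟨i, j, hij, hj, rfl⟩ ⟨hQ _ h1, ?_⟩
    rw [mul_inv_rev, inv_inv]
    exact hQ _ h2
end
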